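/- arXiv:math/0412400 — 3 statements merged into one kernel-verified Lean document; each statement's English description precedes it below -/
import Mathlib

section
/- Let g_1,…,g_m ∈ ℝ[x_1,…,x_n] and let K = {x ∈ ℝ^n : g_j(x) ≥ 0 for j = 1,…,m}. Let f ∈ ℝ[x_1,…,x_n] be nonnegative on K. Then for every ε > 0 there exist nonnegative real scalars λ_1,…,λ_m and r(ε) ∈ ℕ such that, for every r ≥ r(ε), the polynomial f(x) + ε·θ_r(x) + ε·φ_r(z) + ∑_{j=1}^m λ_j·(g_j(x) − z_j^2)^2 in the n+m variables (x_1,…,x_n,z_1,…,z_m) is a sum of squares of real polynomials in ℝ[x,z]. -/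
open MvPolynomial MeasureTheory Filter Topology

/-- `θ_r(x) = ∑_{k=0}^r ∑_{i=1}^n x_i^{2k}/k!` as a polynomial in `ℝ[x_1,…,x_n]`. -/
noncomputable def theta (n r : ℕ) : MvPolynomial (Fin n) ℝ :=
  ∑ k ∈ Finset.range (r + 1), ∑ i : Fin n,
    C ((1 : ℝ) / (Nat.factorial k : ℝ)) * X i ^ (2 * k)

/-- A polynomial is a sum of squares if it is a finite sum of squares of polynomials. -/
def IsSOS {n : ℕ} (p : MvPolynomial (Fin n) ℝ) : Prop :=
  ∃ (k : ℕ) (q : Fin k → MvPolynomial (Fin n) ℝ), p = ∑ i, q i ^ 2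


/-- Coefficient bound of exponential type. -/
def Bnd {σ : Type*} (B c : ℝ) (h : MvPowerSeries σ ℝ) : Prop :=
  ∀ α, |MvPowerSeries.coeff α h| ≤ B * c ^ α.degree / (α.degree.factorial : ℝ)

lemma Bnd.mono {σ : Type*} {B c B' c' : ℝ} {h : MvPowerSeries σ ℝ} (hh : Bnd B c h)
    (hB0 : 0 ≤ B) (hB : B ≤ B') (hc0 : 0 ≤ c) (hc : c ≤ c') : Bnd B' c' h := by
  intro α
  refine (hh α).trans ?_
  have : 0 ≤ B' := hB0.trans hB
  gcongr

lemma Bnd.add {σ : Type*} {B c B' : ℝ} {h h' : MvPowerSeries σ ℝ} (hh : Bnd B c h)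
    (hh' : Bnd B' c h') : Bnd (B + B') c (h + h') := by
  intro α
  rw [map_add]
  refine (abs_add_le _ _).trans ((add_le_add (hh α) (hh' α)).trans (le_of_eq ?_))
  ring

lemma card_antidiag_le {σ : Type*} [DecidableEq σ] (α : σ →₀ ℕ) :
    (Finset.HasAntidiagonal.antidiagonal α).card ≤ 2 ^ α.degree := by
  have h1 : (Finset.HasAntidiagonal.antidiagonal α).card ≤ (Finset.Iic α).card := by
    apply Finset.card_le_card_of_injOn (fun p => p.1)
    · intro p hp
      have := Finset.HasAntidiagonal.mem_antidiagonal.1 hp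
      simp only [Finset.coe_Iic, Set.mem_Iic]
      rw [← this]; exact le_self_add
    · intro p hp q hq hpq
      have h1 := Finset.HasAntidiagonal.mem_antidiagonal.1 hp
      have h2 := Finset.HasAntidiagonal.mem_antidiagonal.1 hq
      have hpq' : p.1 = q.1 := hpq
      refine Prod.ext hpq' ?_
      rw [← h2, hpq'] at h1
      exact add_left_cancel h1
  refine h1.trans ?_
  rw [Finsupp.card_Iic, Finsupp.degree_apply, ← Finset.prod_pow_eq_pow_sum]
  apply Finset.prod_le_prod'
  intro i _
  rw [Nat.card_Iic]
  exact Nat.lt_two_pow_self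

lemma Bnd.mul {σ : Type*} {B c B' : ℝ} {h h' : MvPowerSeries σ ℝ} (hh : Bnd B c h)
    (hh' : Bnd B' c h') (hB : 0 ≤ B) (hB' : 0 ≤ B') (hc : 0 ≤ c) :
    Bnd (B * B') (4 * c) (h * h') := by
  classical
  intro α
  rw [MvPowerSeries.coeff_mul]
  refine (Finset.abs_sum_le_sum_abs _ _).trans ?_
  have key : ∀ p ∈ Finset.HasAntidiagonal.antidiagonal α,
      |MvPowerSeries.coeff p.1 h * MvPowerSeries.coeff p.2 h'| ≤
        B * B' * (2 * c) ^ α.degree / (α.degree.factorial : ℝ) := by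
    intro p hp
    have hp' := Finset.HasAntidiagonal.mem_antidiagonal.1 hp
    have hd : α.degree = p.1.degree + p.2.degree := by rw [← hp', map_add]
    rw [abs_mul]
    refine (mul_le_mul (hh _) (hh' _) (abs_nonneg _) (by positivity)).trans ?_
    have hch : ((p.1.degree + p.2.degree).choose p.1.degree : ℝ) ≤ 2 ^ α.degree := by
      rw [hd]; exact_mod_cast Nat.choose_le_two_pow _ _
    have hfac : ((α.degree).factorial : ℝ) =
        ((p.1.degree + p.2.degree).choose p.1.degree : ℝ) * p.1.degree.factorial
          * p.2.degree.factorial := by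
      have := Nat.choose_mul_factorial_mul_factorial (Nat.le_add_right p.1.degree p.2.degree)
      rw [Nat.add_sub_cancel_left] at this
      rw [hd]; exact_mod_cast this.symm
    rw [div_mul_div_comm, div_le_div_iff₀ (by positivity) (by positivity), hfac, mul_pow]
    calc B * c ^ p.1.degree * (B' * c ^ p.2.degree) *
          (((p.1.degree + p.2.degree).choose p.1.degree : ℝ) * p.1.degree.factorial
          * p.2.degree.factorial)
        ≤ B * c ^ p.1.degree * (B' * c ^ p.2.degree) *
          (2 ^ α.degree * p.1.degree.factorial * p.2.degree.factorial) := by gcongr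
      _ = _ := by rw [hd, pow_add c]; ring
  refine (Finset.sum_le_card_nsmul _ _ _ key).trans ?_
  rw [nsmul_eq_mul]
  have hcard : ((Finset.HasAntidiagonal.antidiagonal α).card : ℝ) ≤ 2 ^ α.degree := by
    exact_mod_cast card_antidiag_le α
  calc ((Finset.HasAntidiagonal.antidiagonal α).card : ℝ) * (B * B' * (2 * c) ^ α.degree / (α.degree.factorial : ℝ))
      ≤ 2 ^ α.degree * (B * B' * (2 * c) ^ α.degree / (α.degree.factorial : ℝ)) := by gcongr
    _ = _ := by
      rw [show (4 : ℝ) * c = 2 * (2 * c) by ring, mul_pow 2 (2 * c)]; ring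

/-- Coefficientwise convergence with a uniform exponential-type bound. -/
def Conv {σ : Type*} (h : ℕ → MvPowerSeries σ ℝ) (h0 : MvPowerSeries σ ℝ) : Prop :=
  (∃ B c : ℝ, 0 ≤ B ∧ 1 ≤ c ∧ ∀ᶠ n in atTop, Bnd B c (h n)) ∧
    ∀ α, Tendsto (fun n => MvPowerSeries.coeff α (h n)) atTop (𝓝 (MvPowerSeries.coeff α h0))

lemma Conv.add {σ : Type*} {h h' : ℕ → MvPowerSeries σ ℝ} {h0 h0' : MvPowerSeries σ ℝ}
    (H : Conv h h0) (H' : Conv h' h0') : Conv (fun n => h n + h' n) (h0 + h0') := by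
  obtain ⟨⟨B, c, hB, hc, hb⟩, ht⟩ := H
  obtain ⟨⟨B', c', hB', hc', hb'⟩, ht'⟩ := H'
  refine ⟨⟨B + B', max c c', by positivity, hc.trans (le_max_left _ _), ?_⟩, ?_⟩
  · filter_upwards [hb, hb'] with n h1 h2
    exact (h1.mono hB le_rfl (by linarith) (le_max_left _ _)).add
      (h2.mono hB' le_rfl (by linarith) (le_max_right _ _))
  · intro α
    simpa using (ht α).add (ht' α)

lemma Conv.mul {σ : Type*} {h h' : ℕ → MvPowerSeries σ ℝ} {h0 h0' : MvPowerSeries σ ℝ}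
    (H : Conv h h0) (H' : Conv h' h0') : Conv (fun n => h n * h' n) (h0 * h0') := by
  classical
  obtain ⟨⟨B, c, hB, hc, hb⟩, ht⟩ := H
  obtain ⟨⟨B', c', hB', hc', hb'⟩, ht'⟩ := H'
  have : c ≤ max c c' := le_max_left _ _
  refine ⟨⟨B * B', 4 * max c c', by positivity, by linarith, ?_⟩, ?_⟩
  · filter_upwards [hb, hb'] with n h1 h2
    exact (h1.mono hB le_rfl (by linarith) (le_max_left _ _)).mul
      (h2.mono hB' le_rfl (by linarith) (le_max_right _ _)) hB hB' (by linarith)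
  · intro α
    simp only [MvPowerSeries.coeff_mul]
    exact tendsto_finsetSum _ fun p _ => (ht p.1).mul (ht' p.2)

lemma Conv.scal {σ : Type*} {a : ℕ → ℝ} {a0 : ℝ} (ha : Tendsto a atTop (𝓝 a0)) :
    Conv (fun n => algebraMap ℝ (MvPowerSeries σ ℝ) (a n)) (algebraMap ℝ _ a0) := by
  classical
  refine ⟨⟨|a0| + 1, 1, by positivity, le_rfl, ?_⟩, ?_⟩
  · have := (ha.abs).eventually (eventually_lt_nhds (show |a0| < |a0| + 1 by linarith))
    filter_upwards [this] with n hn α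
    rw [← MvPowerSeries.c_eq_algebraMap, MvPowerSeries.coeff_C]
    split_ifs with h
    · subst h; simpa using hn.le
    · simp; positivity
  · intro α
    simp only [← MvPowerSeries.c_eq_algebraMap, MvPowerSeries.coeff_C]
    split_ifs with h
    · exact ha
    · exact tendsto_const_nhds

lemma Conv.zero {σ : Type*} : Conv (fun _ => (0 : MvPowerSeries σ ℝ)) 0 := by
  simpa using Conv.scal (σ := σ) (tendsto_const_nhds (x := (0 : ℝ)) (f := atTop))

lemma Conv.one {σ : Type*} : Conv (fun _ => (1 : MvPowerSeries σ ℝ)) 1 := by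
  simpa using Conv.scal (σ := σ) (tendsto_const_nhds (x := (1 : ℝ)) (f := atTop))

lemma Conv.sum {σ ι : Type*} {h : ι → ℕ → MvPowerSeries σ ℝ} {h0 : ι → MvPowerSeries σ ℝ}
    (s : Finset ι) (H : ∀ i ∈ s, Conv (h i) (h0 i)) :
    Conv (fun n => ∑ i ∈ s, h i n) (∑ i ∈ s, h0 i) := by
  classical
  induction s using Finset.induction_on with
  | empty => simpa using Conv.zero
  | insert a s ha ih =>
    simp only [Finset.sum_insert ha]
    exact (H a (by simp)).add (ih fun i hi => H i (by simp [hi]))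

lemma Conv.prod {σ ι : Type*} {h : ι → ℕ → MvPowerSeries σ ℝ} {h0 : ι → MvPowerSeries σ ℝ}
    (s : Finset ι) (H : ∀ i ∈ s, Conv (h i) (h0 i)) :
    Conv (fun n => ∏ i ∈ s, h i n) (∏ i ∈ s, h0 i) := by
  classical
  induction s using Finset.induction_on with
  | empty => simpa using Conv.one
  | insert a s ha ih =>
    simp only [Finset.prod_insert ha]
    exact (H a (by simp)).mul (ih fun i hi => H i (by simp [hi]))

lemma Conv.pow {σ : Type*} {h : ℕ → MvPowerSeries σ ℝ} {h0 : MvPowerSeries σ ℝ}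
    (H : Conv h h0) (k : ℕ) : Conv (fun n => h n ^ k) (h0 ^ k) := by
  simpa using Conv.prod (Finset.range k) (fun _ _ => H)

lemma Conv.aeval {σ τ : Type*} {h : τ → ℕ → MvPowerSeries σ ℝ} {h0 : τ → MvPowerSeries σ ℝ}
    (H : ∀ i, Conv (h i) (h0 i)) (p : MvPolynomial τ ℝ) :
    Conv (fun n => MvPolynomial.aeval (fun i => h i n) p) (MvPolynomial.aeval h0 p) := by
  simp only [MvPolynomial.aeval_def, MvPolynomial.eval₂_eq]
  exact Conv.sum _ fun d _ => (Conv.scal tendsto_const_nhds).mul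
    (Conv.prod _ fun i _ => (H i).pow _)

lemma Conv.bnd_limit {σ : Type*} {h : ℕ → MvPowerSeries σ ℝ} {h0 : MvPowerSeries σ ℝ}
    {B c : ℝ} (hb : ∀ᶠ n in atTop, Bnd B c (h n))
    (ht : ∀ α, Tendsto (fun n => MvPowerSeries.coeff α (h n)) atTop
      (𝓝 (MvPowerSeries.coeff α h0))) : Bnd B c h0 := fun α =>
  le_of_tendsto (ht α).abs (hb.mono fun _ hn => hn α)

lemma Conv.shift {σ : Type*} {h : ℕ → MvPowerSeries σ ℝ} {h0 : MvPowerSeries σ ℝ}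
    (H : Conv (fun n => h (n + 1)) h0) : Conv h h0 := by
  obtain ⟨⟨B, c, hB, hc, hb⟩, ht⟩ := H
  refine ⟨⟨B, c, hB, hc, ?_⟩, fun α => ?_⟩
  · rw [← Filter.map_add_atTop_eq_nat 1]
    exact hb
  · exact (Filter.tendsto_add_atTop_iff_nat (f := fun n => MvPowerSeries.coeff α (h n)) 1).1 (ht α)

/-- Series of exponential type. -/
def expType (σ : Type*) : Subalgebra ℝ (MvPowerSeries σ ℝ) where
  carrier := {h | Conv (fun _ => h) h}
  mul_mem' := fun h h' => Conv.mul h h'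
  add_mem' := fun h h' => Conv.add h h'
  algebraMap_mem' := fun _ => Conv.scal tendsto_const_nhds

lemma Conv.trunc {σ : Type*} [Finite σ] {h : MvPowerSeries σ ℝ} (H : Conv (fun _ => h) h) :
    Conv (fun n => ((MvPowerSeries.truncTotal n h : MvPolynomial σ ℝ) : MvPowerSeries σ ℝ)) h := by
  obtain ⟨⟨B, c, hB, hc, hb⟩, ht⟩ := H
  refine ⟨⟨B, c, hB, hc, ?_⟩, fun α => ?_⟩
  · filter_upwards [hb] with n hn α
    rw [MvPolynomial.coeff_coe]
    rcases lt_or_ge α.degree n with h1 | h1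
    · rw [MvPowerSeries.coeff_truncTotal _ h1]; exact hn α
    · rw [MvPowerSeries.coeff_truncTotal_eq_zero _ h1]; simp; positivity
  · apply tendsto_const_nhds.congr'
    filter_upwards [eventually_gt_atTop α.degree] with n hn
    rw [MvPolynomial.coeff_coe, MvPowerSeries.coeff_truncTotal _ hn]

lemma isSumSq_of_eq {R : Type*} [CommRing R] {a b : R} (h : IsSumSq a) (e : b = a) :
    IsSumSq b := e ▸ h

lemma isSumSq_sq {R : Type*} [CommRing R] (a : R) : IsSumSq (a ^ 2) := by
  rw [pow_two]; exact IsSumSq.mul_self a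

lemma isSumSq_pow_even {R : Type*} [CommRing R] (a : R) (s : ℕ) : IsSumSq (a ^ (2 * s)) := by
  rw [mul_comm, pow_mul]; exact isSumSq_sq _

lemma isSumSq_algebraMap {R : Type*} [CommRing R] [Algebra ℝ R] {a : ℝ} (ha : 0 ≤ a) :
    IsSumSq (algebraMap ℝ R a) := by
  rw [← Real.sq_sqrt ha, map_pow]; exact isSumSq_sq _

lemma isSumSq_C {σ : Type*} {a : ℝ} (ha : 0 ≤ a) : IsSumSq (C a : MvPolynomial σ ℝ) :=
  isSumSq_algebraMap ha

lemma IsSumSq.isSOS {n : ℕ} {p : MvPolynomial (Fin n) ℝ} (h : IsSumSq p) : IsSOS p := by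
  induction h with
  | zero => exact ⟨0, fun _ => 0, by simp⟩
  | sq_add a hs ih =>
    obtain ⟨k, q, rfl⟩ := ih
    refine ⟨k + 1, Fin.cons a q, ?_⟩
    rw [Fin.sum_univ_succ]
    simp [pow_two]

lemma two_var_sos {R : Type*} [CommRing R] (a b : R) (s : ℕ) :
    IsSumSq (a ^ (2 * (s + 1)) + b ^ (2 * (s + 1)) - a ^ 2 * b ^ (2 * s)) := by
  have h := (Commute.all (a ^ 2) (b ^ 2)).geom_sum₂_mul s
  have e : a ^ (2 * (s + 1)) + b ^ (2 * (s + 1)) - a ^ 2 * b ^ (2 * s) =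
      (a ^ 2 - b ^ 2) ^ 2 * (∑ i ∈ Finset.range s, (a ^ 2) ^ i * (b ^ 2) ^ (s - 1 - i))
        + b ^ 2 * a ^ (2 * s) := by
    have : (a ^ 2 - b ^ 2) ^ 2 * (∑ i ∈ Finset.range s, (a ^ 2) ^ i * (b ^ 2) ^ (s - 1 - i))
        = (a ^ 2 - b ^ 2) * ((a ^ 2) ^ s - (b ^ 2) ^ s) := by rw [← h]; ring
    rw [this, ← pow_mul, ← pow_mul, mul_add, pow_add, pow_add]; ring
  rw [e]
  refine ((isSumSq_sq _).mul (IsSumSq.sum fun i _ => ?_)).add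
    ((isSumSq_sq _).mul (isSumSq_pow_even _ _))
  rw [← pow_mul, ← pow_mul]
  exact (isSumSq_pow_even _ _).mul (isSumSq_pow_even _ _)

/-- power sums -/
noncomputable def psumE (N s : ℕ) : MvPolynomial (Fin N) ℝ := ∑ i, X i ^ (2 * s)

lemma psum_sos (N s : ℕ) : IsSumSq (psumE N s) := IsSumSq.sum fun _ _ => isSumSq_pow_even _ _

lemma psum_step (N s : ℕ) (j : Fin N) :
    IsSumSq (C ((N : ℝ) + 1) * psumE N (s + 1) - X j ^ 2 * psumE N s) := by
  have e : C ((N : ℝ) + 1) * psumE N (s + 1) - X j ^ 2 * psumE N s =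
      (∑ i, (X j ^ (2 * (s + 1)) + X i ^ (2 * (s + 1)) - X j ^ 2 * X i ^ (2 * s)))
      + C (N : ℝ) * (∑ i ∈ Finset.univ.erase j, X i ^ (2 * (s + 1))) := by
    have : psumE N (s + 1) = (∑ i ∈ Finset.univ.erase j, X i ^ (2 * (s + 1)))
        + X j ^ (2 * (s + 1)) := by
      rw [Finset.sum_erase_add _ _ (Finset.mem_univ j)]; rfl
    rw [Finset.sum_sub_distrib, Finset.sum_add_distrib, ← Finset.mul_sum]
    change _ = (_ + psumE N (s + 1) - X j ^ 2 * psumE N s) + _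
    rw [Finset.sum_const, Finset.card_univ, Fintype.card_fin, nsmul_eq_mul, map_add, add_mul,
      C_1, one_mul]
    nth_rewrite 1 [this]
    simp only [map_natCast]
    ring
  rw [e]
  exact (IsSumSq.sum fun i _ => two_var_sos _ _ _).add
    ((isSumSq_C (by positivity)).mul (IsSumSq.sum fun _ _ => isSumSq_pow_even _ _))

lemma finsupp_ind {N : ℕ} {P : (Fin N →₀ ℕ) → Prop} (h0 : P 0)
    (h1 : ∀ α j, P α → P (α + Finsupp.single j 1)) (α : Fin N →₀ ℕ) : P α := by
  classical
  have : ∀ m : Multiset (Fin N), P (Multiset.toFinsupp m) := by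
    intro m
    induction m using Multiset.induction_on with
    | empty => simpa using h0
    | cons a m ih =>
      rw [← Multiset.singleton_add, map_add, Multiset.toFinsupp_singleton, add_comm]
      exact h1 _ _ ih
  simpa using this (Finsupp.toMultiset α)

lemma mono_le (N : ℕ) (hN : 1 ≤ N) (α : Fin N →₀ ℕ) :
    IsSumSq (C (((N : ℝ) + 1) ^ α.degree) * psumE N α.degree
      - (monomial α (1 : ℝ)) ^ 2) := by
  induction α using finsupp_ind with
  | h0 =>
    have : C (((N : ℝ) + 1) ^ (0 : Fin N →₀ ℕ).degree) * psumE N (0 : Fin N →₀ ℕ).degree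
      - (monomial (0 : Fin N →₀ ℕ) (1 : ℝ)) ^ 2 = C ((N : ℝ) - 1) := by
      simp [psumE]
    rw [this]
    apply isSumSq_C
    have : (1 : ℝ) ≤ N := by exact_mod_cast hN
    linarith
  | h1 α j ih =>
    have e : C (((N : ℝ) + 1) ^ (α + Finsupp.single j 1).degree)
          * psumE N (α + Finsupp.single j 1).degree
          - (monomial (α + Finsupp.single j 1) (1 : ℝ)) ^ 2 =
        C (((N : ℝ) + 1) ^ α.degree) *
          (C ((N : ℝ) + 1) * psumE N (α.degree + 1) - X j ^ 2 * psumE N α.degree)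
        + X j ^ 2 * (C (((N : ℝ) + 1) ^ α.degree) * psumE N α.degree
          - (monomial α (1 : ℝ)) ^ 2) := by
      have hm : monomial (α + Finsupp.single j 1) (1 : ℝ) = monomial α 1 * X j := by
        rw [X, monomial_mul, one_mul]
      rw [hm, map_add, Finsupp.degree_single, pow_succ, C_mul]
      ring
    rw [e]
    exact ((isSumSq_C (by positivity)).mul (psum_step _ _ _)).add ((isSumSq_sq _).mul ih)

lemma split_exists {N : ℕ} (α : Fin N →₀ ℕ) :
    ∃ β γ, β + γ = α ∧ (γ.degree = β.degree ∨ γ.degree = β.degree + 1) := by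
  induction α using finsupp_ind with
  | h0 => exact ⟨0, 0, by simp, by simp⟩
  | h1 α j ih =>
    obtain ⟨β, γ, rfl, h | h⟩ := ih
    · exact ⟨β, γ + Finsupp.single j 1, by rw [add_assoc], by
        right; rw [map_add, h, Finsupp.degree_single]⟩
    · exact ⟨β + Finsupp.single j 1, γ, by rw [add_right_comm], by
        left; rw [map_add, h, Finsupp.degree_single]⟩

lemma theta_eq (N r : ℕ) :
    theta N r = ∑ k ∈ Finset.range (r + 1), C ((1 : ℝ) / (Nat.factorial k : ℝ)) * psumE N k := by
  simp only [theta, psumE, Finset.mul_sum]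

lemma theta_sos (N r : ℕ) : IsSumSq (theta N r) := by
  rw [theta_eq]
  exact IsSumSq.sum fun k _ => (isSumSq_C (by positivity)).mul (psum_sos _ _)

lemma theta_mono {N r r' : ℕ} (h : r ≤ r') : IsSumSq (theta N r' - theta N r) := by
  have hs : Finset.range (r + 1) ⊆ Finset.range (r' + 1) := by
    apply Finset.range_mono; omega
  rw [theta_eq, theta_eq, ← Finset.sum_sdiff hs, add_sub_cancel_right]
  exact IsSumSq.sum fun k _ => (isSumSq_C (by positivity)).mul (psum_sos _ _)

lemma psum_le_theta (N r s : ℕ) (h : s ≤ r) (a : ℝ) (ha : (s.factorial : ℝ) ≤ a) :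
    IsSumSq (C a * theta N r - psumE N s) := by
  have e : C a * theta N r - psumE N s =
      C (a - s.factorial) * theta N r + C (s.factorial : ℝ) *
        ∑ k ∈ (Finset.range (r + 1)).erase s, C ((1 : ℝ) / (Nat.factorial k : ℝ)) * psumE N k := by
    have h1 : theta N r = (∑ k ∈ (Finset.range (r + 1)).erase s,
        C ((1 : ℝ) / (Nat.factorial k : ℝ)) * psumE N k) + C ((1 : ℝ) / s.factorial) * psumE N s := by
      rw [Finset.sum_erase_add _ _ (by simp; omega), theta_eq]
    have h2 : (C (s.factorial : ℝ) * C ((1 : ℝ) / s.factorial) : MvPolynomial (Fin N) ℝ) = 1 := by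
      rw [← C_mul, mul_one_div_cancel (by positivity), C_1]
    rw [map_sub, sub_mul]
    have h3 : C (s.factorial : ℝ) * theta N r = C (s.factorial : ℝ) *
        (∑ k ∈ (Finset.range (r + 1)).erase s, C ((1 : ℝ) / (Nat.factorial k : ℝ)) * psumE N k)
        + psumE N s := by
      rw [h1, mul_add, ← mul_assoc (C _) (C _) (psumE N s), h2, one_mul]
    rw [h3]; ring
  rw [e]
  exact ((isSumSq_C (by linarith)).mul (theta_sos _ _)).add ((isSumSq_C (by positivity)).mul
    (IsSumSq.sum fun k _ => (isSumSq_C (by positivity)).mul (psum_sos _ _)))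

lemma sq_le_theta (N : ℕ) (hN : 1 ≤ N) (α β : Fin N →₀ ℕ) (r : ℕ)
    (h1 : β.degree ≤ α.degree) (h2 : β.degree ≤ α.degree / 2 + 1) (hr : α.degree / 2 + 1 ≤ r) :
    IsSumSq (C (((N : ℝ) + 1) ^ α.degree * (α.degree / 2 + 1).factorial) * theta N r
      - (monomial β (1 : ℝ)) ^ 2) := by
  have hp : ((N : ℝ) + 1) ^ β.degree ≤ ((N : ℝ) + 1) ^ α.degree :=
    pow_le_pow_right₀ (by linarith [Nat.cast_nonneg (α := ℝ) N]) h1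
  have A := mono_le N hN β
  have B := psum_le_theta N r β.degree (h2.trans hr) ((α.degree / 2 + 1).factorial : ℝ)
    (by exact_mod_cast Nat.factorial_le h2)
  have D : IsSumSq (C (((N : ℝ) + 1) ^ α.degree - ((N : ℝ) + 1) ^ β.degree) *
      psumE N β.degree) := (isSumSq_C (by linarith)).mul (psum_sos _ _)
  have B' := (isSumSq_C (σ := Fin N) (a := ((N : ℝ) + 1) ^ α.degree) (by positivity)).mul B
  have := (B'.add D).add A
  refine isSumSq_of_eq this ?_
  rw [C_mul, map_sub]; ring

lemma monomial_le_theta (N : ℕ) (hN : 1 ≤ N) (α : Fin N →₀ ℕ) (e : ℝ) (r : ℕ)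
    (hr : α.degree / 2 + 1 ≤ r) :
    IsSumSq (C (|e| * (((N : ℝ) + 1) ^ α.degree * (α.degree / 2 + 1).factorial)) * theta N r
      + monomial α e) := by
  obtain ⟨β, γ, hα, hd⟩ := split_exists α
  have hdeg : α.degree = β.degree + γ.degree := by rw [← hα, map_add]
  have hb := sq_le_theta N hN α β r (by omega) (by omega) hr
  have hc := sq_le_theta N hN α γ r (by omega) (by omega) hr
  have hm : monomial α e = C e * (monomial β (1 : ℝ) * monomial γ 1) := by
    rw [monomial_mul, hα, C_mul_monomial]; simp
  have h0 : IsSumSq (C (|e| / 2) : MvPolynomial (Fin N) ℝ) := isSumSq_C (by positivity)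
  have key : ∃ t : ℝ, t * t = 1 ∧ |e| * t = e := by
    rcases le_total 0 e with h | h
    · exact ⟨1, by norm_num, by rw [abs_of_nonneg h]; ring⟩
    · exact ⟨-1, by norm_num, by rw [abs_of_nonpos h]; ring⟩
  obtain ⟨t, ht, hte⟩ := key
  have := (h0.mul (hb.add hc)).add (h0.mul (isSumSq_sq (monomial β (1 : ℝ) + C t * monomial γ 1)))
  refine isSumSq_of_eq this ?_
  have e4 : (C e : MvPolynomial (Fin N) ℝ) = C |e| * C t := by rw [← C_mul, hte]
  have e2 : (C t : MvPolynomial (Fin N) ℝ) * C t = 1 := by rw [← C_mul, ht, C_1]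
  have e3 : (C |e| : MvPolynomial (Fin N) ℝ) = C (|e| / 2) + C (|e| / 2) := by
    rw [← C_add]; congr 1; ring
  rw [hm, e4, C_mul (a := |e|), e3]
  linear_combination (-(C (|e| / 2) * (monomial γ (1 : ℝ)) ^ 2)) * e2

/-- weights -/
noncomputable def rho (N k : ℕ) : ℝ := 1 / ((2 * ((N : ℝ) + 1)) ^ k * (k / 2 + 1).factorial)

lemma rho_pos (N k : ℕ) : 0 < rho N k := by unfold rho; positivity

lemma sum_half_le (N : ℕ) (s : Finset (Fin N →₀ ℕ)) :
    ∑ α ∈ s, ((1 : ℝ) / 2) ^ α.degree ≤ 2 ^ N := by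
  classical
  set D := s.sup (fun α => α.degree) + 1 with hD
  have hinj : Function.Injective (fun α : Fin N →₀ ℕ => (α : Fin N → ℕ)) := DFunLike.coe_injective
  have h1 : ∑ α ∈ s, ((1 : ℝ) / 2) ^ α.degree =
      ∑ x ∈ s.image (fun α : Fin N →₀ ℕ => (α : Fin N → ℕ)), ∏ i, ((1 : ℝ) / 2) ^ x i := by
    rw [Finset.sum_image (fun a _ b _ h => hinj h)]
    refine Finset.sum_congr rfl fun α _ => ?_
    rw [Finset.prod_pow_eq_pow_sum, Finsupp.degree_eq_sum]
  have h2 : s.image (fun α : Fin N →₀ ℕ => (α : Fin N → ℕ)) ⊆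
      Fintype.piFinset (fun _ => Finset.range D) := by
    intro x hx
    obtain ⟨α, hα, rfl⟩ := Finset.mem_image.1 hx
    rw [Fintype.mem_piFinset]
    intro i
    rw [Finset.mem_range, hD, Nat.lt_succ_iff]
    exact (Finsupp.le_degree i α).trans (Finset.le_sup (f := fun α => α.degree) hα)
  rw [h1]
  refine (Finset.sum_le_sum_of_subset_of_nonneg h2 fun _ _ _ => by positivity).trans ?_
  rw [← Finset.prod_univ_sum (fun _ => Finset.range D) (fun _ j => ((1 : ℝ) / 2) ^ j)]
  rw [Finset.prod_const, Finset.card_univ, Fintype.card_fin]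
  exact pow_le_pow_left₀ (Finset.sum_nonneg fun _ _ => by positivity) (sum_geometric_two_le D) N

/-- small in the weighted sup norm -/
def Near {N : ℕ} (δ : ℝ) (h : MvPowerSeries (Fin N) ℝ) : Prop :=
  ∀ α, |MvPowerSeries.coeff α h| ≤ δ * rho N α.degree

lemma near_sos {N : ℕ} (hN : 1 ≤ N) {δ : ℝ} (hδ : 0 ≤ δ) {e : MvPolynomial (Fin N) ℝ}
    (he : Near δ (e : MvPowerSeries (Fin N) ℝ)) :
    ∃ r, IsSumSq (C (δ * 2 ^ N) * theta N r + e) := by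
  classical
  refine ⟨e.support.sup (fun α => α.degree) + 1, ?_⟩
  set r := e.support.sup (fun α => α.degree) + 1 with hr
  set w : (Fin N →₀ ℕ) → ℝ := fun α =>
    |e.coeff α| * (((N : ℝ) + 1) ^ α.degree * (α.degree / 2 + 1).factorial) with hw
  have h1 : IsSumSq (∑ α ∈ e.support, (C (w α) * theta N r + monomial α (e.coeff α))) := by
    refine IsSumSq.sum fun α hα => monomial_le_theta N hN α _ r ?_
    have := Finset.le_sup (f := fun α : Fin N →₀ ℕ => α.degree) hα
    omega
  have h2 : ∑ α ∈ e.support, w α ≤ δ * 2 ^ N := by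
    calc ∑ α ∈ e.support, w α ≤ ∑ α ∈ e.support, δ * ((1 : ℝ) / 2) ^ α.degree := by
          refine Finset.sum_le_sum fun α _ => ?_
          have := he α
          rw [coeff_coe] at this
          calc w α ≤ δ * rho N α.degree *
                (((N : ℝ) + 1) ^ α.degree * (α.degree / 2 + 1).factorial) := by
                simp only [hw]; gcongr
            _ = _ := by
              unfold rho
              rw [mul_pow, one_div_pow]
              field_simp
      _ ≤ _ := by
          rw [← Finset.mul_sum]
          exact mul_le_mul_of_nonneg_left (sum_half_le N _) hδ
  have h3 : IsSumSq (C (δ * 2 ^ N - ∑ α ∈ e.support, w α) * theta N r) :=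
    (isSumSq_C (by linarith)).mul (theta_sos _ _)
  have := h3.add h1
  refine isSumSq_of_eq this ?_
  rw [Finset.sum_add_distrib, ← Finset.sum_mul, ← map_sum, map_sub, ← MvPolynomial.as_sum]
  ring

lemma super_exp (N : ℕ) {B c δ : ℝ} (hB : 0 ≤ B) (hc : 1 ≤ c) (hδ : 0 < δ) :
    ∀ᶠ k : ℕ in atTop, B * c ^ k / (k.factorial : ℝ) ≤ δ * rho N k := by
  set b := c * (2 * ((N : ℝ) + 1)) with hb
  have hN0 : (0 : ℝ) ≤ N := Nat.cast_nonneg N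
  have hb1 : 1 ≤ b := by nlinarith
  have hlim := (FloorSemiring.tendsto_pow_div_factorial_atTop (b ^ 2)).const_mul (B * b ^ 2)
  rw [mul_zero] at hlim
  have hj : Tendsto (fun k : ℕ => k - (k / 2 + 1)) atTop atTop := by
    rw [tendsto_atTop]
    intro a
    filter_upwards [eventually_ge_atTop (2 * a + 2)] with k hk
    omega
  have hev := (hlim.comp hj).eventually (eventually_lt_nhds hδ)
  filter_upwards [hev, eventually_ge_atTop 1] with k hk hk1
  simp only [Function.comp] at hk
  set j := k - (k / 2 + 1) with hjdef
  rw [← mul_div_assoc, div_lt_iff₀ (by positivity)] at hk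
  have hfac : ((k / 2 + 1).factorial : ℝ) * j.factorial ≤ k.factorial := by
    exact_mod_cast Nat.le_of_dvd (Nat.factorial_pos _)
      (Nat.factorial_mul_factorial_dvd_factorial (by omega))
  have hpow : b ^ k ≤ b ^ 2 * (b ^ 2) ^ j := by
    rw [← pow_mul, ← pow_add]
    exact pow_le_pow_right₀ hb1 (by omega)
  unfold rho
  rw [mul_one_div, div_le_div_iff₀ (by positivity) (by positivity)]
  calc B * c ^ k * ((2 * ((N : ℝ) + 1)) ^ k * (k / 2 + 1).factorial)
      = B * b ^ k * (k / 2 + 1).factorial := by rw [hb, mul_pow c]; ring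
    _ ≤ B * (b ^ 2 * (b ^ 2) ^ j) * (k / 2 + 1).factorial := by gcongr
    _ ≤ (δ * j.factorial) * (k / 2 + 1).factorial := by
        apply mul_le_mul_of_nonneg_right _ (by positivity)
        linarith
    _ = δ * ((k / 2 + 1).factorial * j.factorial) := by ring
    _ ≤ δ * k.factorial := by gcongr

lemma Near.add {N : ℕ} {δ δ' : ℝ} {h h' : MvPowerSeries (Fin N) ℝ} (H : Near δ h)
    (H' : Near δ' h') : Near (δ + δ') (h + h') := by
  intro α
  rw [map_add, add_mul]
  exact (abs_add_le _ _).trans (add_le_add (H α) (H' α))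

lemma Near.neg {N : ℕ} {δ : ℝ} {h : MvPowerSeries (Fin N) ℝ} (H : Near δ h) : Near δ (-h) := by
  intro α
  rw [map_neg, abs_neg]; exact H α

lemma Conv.near {N : ℕ} {h : ℕ → MvPowerSeries (Fin N) ℝ} {h0 : MvPowerSeries (Fin N) ℝ}
    (H : Conv h h0) {δ : ℝ} (hδ : 0 < δ) : ∀ᶠ n in atTop, Near δ (h0 - h n) := by
  obtain ⟨⟨B, c, hB, hc, hb⟩, ht⟩ := H
  have hb0 := Conv.bnd_limit hb ht
  obtain ⟨A, hA⟩ := eventually_atTop.1 (super_exp N hB hc (half_pos hδ))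
  have hfin : ∀ᶠ n in atTop, ∀ α ∈ {α : Fin N →₀ ℕ | α.degree ≤ A},
      |MvPowerSeries.coeff α (h0 - h n)| ≤ δ * rho N α.degree := by
    rw [eventually_all_finite (Finsupp.finite_of_degree_le A)]
    intro α _
    have h1 : Tendsto (fun n => |MvPowerSeries.coeff α (h0 - h n)|) atTop (𝓝 0) := by
      have := (tendsto_const_nhds (x := MvPowerSeries.coeff α h0)).sub (ht α)
      simpa using this.abs
    exact (h1.eventually (eventually_lt_nhds (mul_pos hδ (rho_pos N _)))).mono fun _ => le_of_lt
  filter_upwards [hb, hfin] with n hn hf α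
  rcases le_total α.degree A with hα | hα
  · exact hf α hα
  · rw [map_sub]
    refine (abs_sub _ _).trans ?_
    have := hA _ hα
    linarith [hn α, hb0 α]

/-- closure of the sos cone -/
def Pcl {N : ℕ} (h : MvPowerSeries (Fin N) ℝ) : Prop :=
  ∀ δ : ℝ, 0 < δ → ∃ q : MvPolynomial (Fin N) ℝ, IsSumSq q ∧
    Near δ (h - (q : MvPowerSeries (Fin N) ℝ))

lemma Pcl.add {N : ℕ} {h h' : MvPowerSeries (Fin N) ℝ} (H : Pcl h) (H' : Pcl h') :
    Pcl (h + h') := by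
  intro δ hδ
  obtain ⟨q, hq, hn⟩ := H _ (half_pos hδ)
  obtain ⟨q', hq', hn'⟩ := H' _ (half_pos hδ)
  refine ⟨q + q', hq.add hq', ?_⟩
  have := hn.add hn'
  rw [add_halves] at this
  rw [MvPolynomial.coe_add]
  convert this using 1; ring

lemma Pcl.limit {N : ℕ} {h : ℕ → MvPowerSeries (Fin N) ℝ} {h0 : MvPowerSeries (Fin N) ℝ}
    (H : Conv h h0) (hp : ∀ n, Pcl (h n)) : Pcl h0 := by
  intro δ hδ
  obtain ⟨n, hn⟩ := (H.near (half_pos hδ)).exists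
  obtain ⟨q, hq, hn'⟩ := hp n _ (half_pos hδ)
  refine ⟨q, hq, ?_⟩
  have := hn.add hn'
  rw [add_halves] at this
  convert this using 1; ring

lemma Pcl.of_sos {N : ℕ} {q : MvPolynomial (Fin N) ℝ} (hq : IsSumSq q) :
    Pcl (q : MvPowerSeries (Fin N) ℝ) := by
  intro δ hδ
  refine ⟨q, hq, fun α => ?_⟩
  have := rho_pos N α.degree
  rw [sub_self, map_zero, abs_zero]; positivity

lemma Pcl.of_expType {N : ℕ} {h : expType (Fin N)} (hh : IsSumSq h) :
    Pcl (h : MvPowerSeries (Fin N) ℝ) := by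
  induction hh with
  | zero => simpa using Pcl.of_sos (IsSumSq.zero (R := MvPolynomial (Fin N) ℝ))
  | sq_add a hs ih =>
    refine Pcl.add ?_ ih
    have hc : Conv (fun _ => (a : MvPowerSeries (Fin N) ℝ)) a := a.2
    refine Pcl.limit (hc.trunc.mul hc.trunc) fun n => ?_
    rw [← MvPolynomial.coe_mul]
    exact Pcl.of_sos (IsSumSq.mul_self _)

/-- cosine series -/
noncomputable def cosP (t : ℝ) : PowerSeries ℝ :=
  PowerSeries.mk fun k => (Complex.I ^ k).re * t ^ k / (k.factorial : ℝ)

/-- sine series divided by the scale -/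
noncomputable def dinP (t : ℝ) : PowerSeries ℝ :=
  PowerSeries.mk fun k => (Complex.I ^ k).im * t ^ (k - 1) / (k.factorial : ℝ)

lemma deriv_cosP (t : ℝ) :
    PowerSeries.derivative ℝ (cosP t) = PowerSeries.C (-t ^ 2) * dinP t := by
  ext k
  rw [PowerSeries.coeff_derivative, PowerSeries.coeff_C_mul, cosP, dinP, PowerSeries.coeff_mk,
    PowerSeries.coeff_mk, pow_succ, Complex.mul_re, Complex.I_re, Complex.I_im, Nat.factorial_succ]
  rcases k with _ | k
  · simp
  · rw [Nat.add_sub_cancel]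
    push_cast
    field_simp
    ring

lemma deriv_dinP (t : ℝ) : PowerSeries.derivative ℝ (dinP t) = cosP t := by
  ext k
  rw [PowerSeries.coeff_derivative, cosP, dinP, PowerSeries.coeff_mk,
    PowerSeries.coeff_mk, pow_succ, Complex.mul_im, Complex.I_re, Complex.I_im, Nat.factorial_succ]
  rw [Nat.add_sub_cancel]
  push_cast
  field_simp
  ring

lemma cos_sq_add (t : ℝ) : cosP t ^ 2 + PowerSeries.C (t ^ 2) * dinP t ^ 2 = 1 := by
  apply PowerSeries.derivative.ext
  · rw [map_add, Derivation.leibniz, Derivation.leibniz_pow, Derivation.leibniz_pow, deriv_cosP,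
      deriv_dinP, PowerSeries.derivative_C, PowerSeries.derivative_one]
    simp only [smul_eq_mul, nsmul_eq_mul, map_neg]
    push_cast
    ring
  · have h1 : PowerSeries.constantCoeff (cosP t) = 1 := by
      rw [← PowerSeries.coeff_zero_eq_constantCoeff_apply, cosP, PowerSeries.coeff_mk]; norm_num
    have h2 : PowerSeries.constantCoeff (dinP t) = 0 := by
      rw [← PowerSeries.coeff_zero_eq_constantCoeff_apply, dinP, PowerSeries.coeff_mk]; norm_num
    rw [map_add, map_mul, map_pow, map_pow _ (dinP t), h1, h2, map_one]; norm_num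

lemma abs_re_I_pow (k : ℕ) : |(Complex.I ^ k).re| ≤ 1 := by
  refine (Complex.abs_re_le_norm _).trans ?_
  simp

lemma abs_im_I_pow (k : ℕ) : |(Complex.I ^ k).im| ≤ 1 := by
  refine (Complex.abs_im_le_norm _).trans ?_
  simp

lemma conv_subst {N : ℕ} (i : Fin N) {f : ℕ → PowerSeries ℝ} {f0 : PowerSeries ℝ}
    (hb : ∀ n k, |PowerSeries.coeff k (f n)| ≤ 1 / (k.factorial : ℝ))
    (ht : ∀ k, Tendsto (fun n => PowerSeries.coeff k (f n)) atTop
      (𝓝 (PowerSeries.coeff k f0))) :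
    Conv (fun n => (f n).subst (MvPowerSeries.X i : MvPowerSeries (Fin N) ℝ))
      (f0.subst (MvPowerSeries.X i : MvPowerSeries (Fin N) ℝ)) := by
  refine ⟨⟨1, 1, zero_le_one, le_rfl, ?_⟩, fun α => ?_⟩
  · refine Eventually.of_forall fun n α => ?_
    rw [PowerSeries.coeff_subst_single]
    split_ifs with h
    · have : α.degree = α i := by rw [h]; simp
      rw [this, one_pow, mul_one]
      exact hb n _
    · simp
  · simp only [PowerSeries.coeff_subst_single]
    split_ifs with h
    · exact ht _
    · exact tendsto_const_nhds

lemma cosP_bound {t : ℝ} (h0 : 0 ≤ t) (h1 : t ≤ 1) (k : ℕ) :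
    |PowerSeries.coeff k (cosP t)| ≤ 1 / (k.factorial : ℝ) := by
  rw [cosP, PowerSeries.coeff_mk, abs_div, abs_mul, abs_pow, abs_of_nonneg h0,
    abs_of_nonneg (Nat.cast_nonneg (α := ℝ) _)]
  gcongr
  exact mul_le_one₀ (abs_re_I_pow k) (by positivity) (pow_le_one₀ h0 h1)

lemma dinP_bound {t : ℝ} (h0 : 0 ≤ t) (h1 : t ≤ 1) (k : ℕ) :
    |PowerSeries.coeff k (dinP t)| ≤ 1 / (k.factorial : ℝ) := by
  rw [dinP, PowerSeries.coeff_mk, abs_div, abs_mul, abs_pow, abs_of_nonneg h0,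
    abs_of_nonneg (Nat.cast_nonneg (α := ℝ) _)]
  gcongr
  exact mul_le_one₀ (abs_im_I_pow k) (by positivity) (pow_le_one₀ h0 h1)

/-- scales -/
noncomputable def tau (n : ℕ) : ℝ := 1 / ((n : ℝ) + 1)

lemma tau_pos (n : ℕ) : 0 < tau n := by unfold tau; positivity
lemma tau_le (n : ℕ) : tau n ≤ 1 := by
  unfold tau
  rw [div_le_one (by positivity)]
  linarith [Nat.cast_nonneg (α := ℝ) n]
lemma tau_lim : Tendsto tau atTop (𝓝 0) := tendsto_one_div_add_atTop_nhds_zero_nat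

/-- multivariate cosine -/
noncomputable def cM (N : ℕ) (t : ℝ) (i : Fin N) : MvPowerSeries (Fin N) ℝ :=
  (cosP t).subst (MvPowerSeries.X i : MvPowerSeries (Fin N) ℝ)

/-- multivariate scaled sine -/
noncomputable def dM (N : ℕ) (t : ℝ) (i : Fin N) : MvPowerSeries (Fin N) ℝ :=
  (dinP t).subst (MvPowerSeries.X i : MvPowerSeries (Fin N) ℝ)

lemma cM_sq_add (N : ℕ) (t : ℝ) (i : Fin N) :
    cM N t i ^ 2 + algebraMap ℝ _ (t ^ 2) * dM N t i ^ 2 = 1 := by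
  have hs : PowerSeries.HasSubst (MvPowerSeries.X i : MvPowerSeries (Fin N) ℝ) :=
    PowerSeries.HasSubst.X i
  have := congrArg (PowerSeries.substAlgHom (R := ℝ) hs) (cos_sq_add t)
  have h2 : (PowerSeries.substAlgHom (R := ℝ) hs) (PowerSeries.C (t ^ 2)) =
      algebraMap ℝ _ (t ^ 2) := (PowerSeries.substAlgHom (R := ℝ) hs).commutes (t ^ 2)
  rw [map_add, map_mul, h2, map_pow, map_pow _ (dinP t), map_one, PowerSeries.coe_substAlgHom] at this
  exact this

lemma cM_conv (N : ℕ) (i : Fin N) : Conv (fun n => cM N (tau n) i) 1 := by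
  have h1 : (1 : MvPowerSeries (Fin N) ℝ) = (1 : PowerSeries ℝ).subst (MvPowerSeries.X i) := by
    rw [← PowerSeries.coe_substAlgHom (PowerSeries.HasSubst.X i), map_one]
  rw [h1]
  refine conv_subst i (fun n k => cosP_bound (tau_pos n).le (tau_le n) k) fun k => ?_
  have h2 : PowerSeries.coeff k (1 : PowerSeries ℝ) =
      (Complex.I ^ k).re * 0 ^ k / (k.factorial : ℝ) := by
    rcases k with _ | k <;> simp [PowerSeries.coeff_one]
  rw [h2]
  simp only [cosP, PowerSeries.coeff_mk]
  exact ((tau_lim.pow k).const_mul _).div_const _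

lemma dM_conv (N : ℕ) (i : Fin N) : Conv (fun n => dM N (tau n) i) (MvPowerSeries.X i) := by
  have h1 : (MvPowerSeries.X i : MvPowerSeries (Fin N) ℝ) =
      (PowerSeries.X : PowerSeries ℝ).subst (MvPowerSeries.X i) := by
    rw [PowerSeries.subst_X (PowerSeries.HasSubst.X i)]
  rw [h1]
  refine conv_subst i (fun n k => dinP_bound (tau_pos n).le (tau_le n) k) fun k => ?_
  have h2 : PowerSeries.coeff k (PowerSeries.X : PowerSeries ℝ) =
      (Complex.I ^ k).im * 0 ^ (k - 1) / (k.factorial : ℝ) := by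
    rcases k with _ | _ | k <;> simp [PowerSeries.coeff_X]
  rw [h2]
  simp only [dinP, PowerSeries.coeff_mk]
  exact ((tau_lim.pow (k - 1)).const_mul _).div_const _

lemma cM_mem (N : ℕ) (n : ℕ) (i : Fin N) : cM N (tau n) i ∈ expType (Fin N) :=
  conv_subst i (fun _ k => cosP_bound (tau_pos n).le (tau_le n) k) fun _ => tendsto_const_nhds

lemma dM_mem (N : ℕ) (n : ℕ) (i : Fin N) : dM N (tau n) i ∈ expType (Fin N) :=
  conv_subst i (fun _ k => dinP_bound (tau_pos n).le (tau_le n) k) fun _ => tendsto_const_nhds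

/-- binomial moments -/
noncomputable def bmom {R : Type*} [CommRing R] [Algebra ℝ R] (Y Z : R) (M l : ℕ) : R :=
  ∑ a ∈ Finset.range (M + 1),
    algebraMap ℝ R ((a : ℝ) ^ l) * (algebraMap ℝ R (M.choose a : ℝ) * (Y ^ a * Z ^ (M - a)))

lemma bmom_zero {R : Type*} [CommRing R] [Algebra ℝ R] {Y Z : R} (h : Y + Z = 1) (M : ℕ) :
    bmom Y Z M 0 = 1 := by
  have := add_pow Y Z M
  rw [h, one_pow] at this
  rw [this, bmom]
  refine Finset.sum_congr rfl fun a _ => ?_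
  simp; ring

lemma bmom_succ {R : Type*} [CommRing R] [Algebra ℝ R] (Y Z : R) (M j : ℕ) :
    bmom Y Z (M + 1) (j + 1) = algebraMap ℝ R ((M : ℝ) + 1) * (Y *
      ∑ l ∈ Finset.range (j + 1), algebraMap ℝ R (j.choose l : ℝ) * bmom Y Z M l) := by
  unfold bmom
  rw [Finset.sum_range_succ']
  simp only [Finset.mul_sum]
  rw [Finset.sum_comm]
  simp only [Nat.cast_zero, ne_eq, Nat.add_eq_zero_iff, one_ne_zero, and_false, not_false_eq_true,
    zero_pow, map_zero, zero_mul, add_zero]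
  refine Finset.sum_congr rfl fun a _ => ?_
  have hch : ((M : ℝ) + 1) * (M.choose a : ℝ) = ((M + 1).choose (a + 1) : ℝ) * ((a : ℝ) + 1) := by
    exact_mod_cast Nat.add_one_mul_choose_eq M a
  have hbin : ((a : ℝ) + 1) ^ j = ∑ l ∈ Finset.range (j + 1), (j.choose l : ℝ) * (a : ℝ) ^ l := by
    rw [add_pow]; refine Finset.sum_congr rfl fun l _ => ?_
    simp; ring
  calc algebraMap ℝ R (((a + 1 : ℕ) : ℝ) ^ (j + 1)) * (algebraMap ℝ R ((M + 1).choose (a + 1) : ℝ)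
        * (Y ^ (a + 1) * Z ^ (M + 1 - (a + 1))))
      = algebraMap ℝ R (((M + 1).choose (a + 1) : ℝ) * ((a : ℝ) + 1)) *
          algebraMap ℝ R (((a : ℝ) + 1) ^ j) * (Y * (Y ^ a * Z ^ (M - a))) := by
        rw [Nat.add_sub_add_right]
        rw [Nat.cast_add, Nat.cast_one, pow_succ ((a : ℝ) + 1) j, map_mul, map_mul]
        ring
    _ = _ := by
        rw [← hch, hbin, map_sum, Finset.mul_sum, Finset.sum_mul]
        refine Finset.sum_congr rfl fun l _ => ?_
        simp only [map_mul]
        ring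

lemma scal_lim {j l : ℕ} (h : l ≤ j) :
    Tendsto (fun M : ℕ => ((M : ℝ) + 1) ^ (l + 1) / ((M : ℝ) + 2) ^ (j + 1)) atTop
      (𝓝 (0 ^ (j - l))) := by
  have h1 : Tendsto (fun M : ℕ => 1 / ((M : ℝ) + 2)) atTop (𝓝 0) := by
    have := (tendsto_add_atTop_iff_nat (f := fun n : ℕ => 1 / ((n : ℝ) + 1)) 1).2
      tendsto_one_div_add_atTop_nhds_zero_nat
    refine this.congr fun n => ?_
    push_cast; ring
  have h2 := (h1.const_sub 1).pow (l + 1) |>.mul (h1.pow (j - l))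
  rw [sub_zero, one_pow, one_mul] at h2
  refine h2.congr fun M => ?_
  have h3 : (M : ℝ) + 2 ≠ 0 := by positivity
  have h4 : 1 - 1 / ((M : ℝ) + 2) = ((M : ℝ) + 1) / ((M : ℝ) + 2) := by field_simp; ring
  rw [h4, div_pow, div_pow, one_pow, div_mul_div_comm, mul_one, ← pow_add]
  congr 2
  omega

lemma bmom_conv {N : ℕ} {Y Z : MvPowerSeries (Fin N) ℝ} (h : Y + Z = 1)
    (hY : Y ∈ expType (Fin N)) (l : ℕ) :
    Conv (fun M : ℕ => algebraMap ℝ _ ((((M : ℝ) + 1) ^ l)⁻¹) * bmom Y Z M l) (Y ^ l) := by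
  induction l using Nat.strong_induction_on with
  | _ l ih =>
    rcases l with _ | j
    · simpa [bmom_zero h] using Conv.one
    · apply Conv.shift
      have h1 : Conv (fun M : ℕ => Y * ∑ l ∈ Finset.range (j + 1),
          algebraMap ℝ (MvPowerSeries (Fin N) ℝ)
            ((j.choose l : ℝ) * (((M : ℝ) + 1) ^ (l + 1) / ((M : ℝ) + 2) ^ (j + 1))) *
          (algebraMap ℝ _ ((((M : ℝ) + 1) ^ l)⁻¹) * bmom Y Z M l))
          (Y * ∑ l ∈ Finset.range (j + 1),
            algebraMap ℝ (MvPowerSeries (Fin N) ℝ) ((j.choose l : ℝ) * 0 ^ (j - l)) * Y ^ l) := by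
        refine Conv.mul hY (Conv.sum _ fun l hl => ?_)
        have hl' : l < j + 1 := Finset.mem_range.1 hl
        exact (Conv.scal ((scal_lim (by omega)).const_mul _)).mul (ih l hl')
      have h2 : Y * ∑ l ∈ Finset.range (j + 1),
            algebraMap ℝ (MvPowerSeries (Fin N) ℝ) ((j.choose l : ℝ) * 0 ^ (j - l)) * Y ^ l
          = Y ^ (j + 1) := by
        rw [Finset.sum_eq_single_of_mem j (by simp)]
        · simp [pow_succ']
        · intro l hl hne
          have hl' : l < j + 1 := Finset.mem_range.1 hl
          have : j - l ≠ 0 := by omega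
          simp [this]
      rw [h2] at h1
      convert h1 using 2 with M
      rw [bmom_succ, ← mul_assoc, ← map_mul, mul_left_comm, Finset.mul_sum]
      congr 1
      refine Finset.sum_congr rfl fun l _ => ?_
      simp only [← mul_assoc, ← map_mul]
      congr 2
      push_cast
      have h3 : (M : ℝ) + 2 ≠ 0 := by positivity
      have h4 : (M : ℝ) + 1 ≠ 0 := by positivity
      have h5 : (M : ℝ) + 1 + 1 = M + 2 := by ring
      rw [h5]
      field_simp
      ring

/-- Bernstein operator -/
noncomputable def bern {N : ℕ} {R : Type*} [CommRing R] [Algebra ℝ R] (Y Z : Fin N → R)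
    (p : MvPolynomial (Fin N) ℝ) (M : ℕ) : R :=
  ∑ a ∈ Fintype.piFinset (fun _ : Fin N => Finset.range (M + 1)),
    algebraMap ℝ R (eval (fun i => (a i : ℝ) / ((M : ℝ) + 1)) p) *
      ∏ i, (algebraMap ℝ R (M.choose (a i) : ℝ) * (Y i ^ (a i) * Z i ^ (M - a i)))

lemma bern_eq {N : ℕ} {R : Type*} [CommRing R] [Algebra ℝ R] (Y Z : Fin N → R)
    (p : MvPolynomial (Fin N) ℝ) (M : ℕ) :
    bern Y Z p M = ∑ d ∈ p.support, algebraMap ℝ R (p.coeff d) *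
      ∏ i, (algebraMap ℝ R ((((M : ℝ) + 1) ^ (d i))⁻¹) * bmom (Y i) (Z i) M (d i)) := by
  unfold bern bmom
  simp only [eval_eq', map_sum, Finset.sum_mul, Finset.mul_sum]
  rw [Finset.sum_comm]
  refine Finset.sum_congr rfl fun d _ => ?_
  rw [Finset.prod_univ_sum, Finset.mul_sum]
  refine Finset.sum_congr rfl fun a _ => ?_
  rw [map_mul, mul_assoc, map_prod, ← Finset.prod_mul_distrib]
  congr 1
  refine Finset.prod_congr rfl fun i _ => ?_
  rw [div_pow, div_eq_inv_mul, map_mul]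
  ring

lemma bern_conv {N : ℕ} {Y Z : Fin N → MvPowerSeries (Fin N) ℝ} (h : ∀ i, Y i + Z i = 1)
    (hY : ∀ i, Y i ∈ expType (Fin N)) (p : MvPolynomial (Fin N) ℝ) :
    Conv (bern Y Z p) (aeval Y p) := by
  have e : bern Y Z p = fun M => _ := funext fun M => bern_eq Y Z p M
  rw [e, aeval_def, eval₂_eq']
  exact Conv.sum _ fun d _ => (Conv.scal tendsto_const_nhds).mul
    (Conv.prod _ fun i _ => bmom_conv (h i) (hY i) _)

lemma isSumSq_pow {R : Type*} [CommRing R] {a : R} (h : IsSumSq a) (k : ℕ) : IsSumSq (a ^ k) := by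
  induction k with
  | zero => simp
  | succ k ih => rw [pow_succ]; exact ih.mul h

lemma bern_sos {N : ℕ} {R : Type*} [CommRing R] [Algebra ℝ R] {Y Z : Fin N → R}
    (hY : ∀ i, IsSumSq (Y i)) (hZ : ∀ i, IsSumSq (Z i))
    {p : MvPolynomial (Fin N) ℝ} (hp : ∀ x, 0 ≤ eval x p) (M : ℕ) : IsSumSq (bern Y Z p M) := by
  refine IsSumSq.sum fun a _ => (isSumSq_algebraMap (hp _)).mul (IsSumSq.prod fun i _ => ?_)
  exact (isSumSq_algebraMap (by positivity)).mul
    ((isSumSq_pow (hY i) _).mul (isSumSq_pow (hZ i) _))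

lemma bern_map {N : ℕ} {R S : Type*} [CommRing R] [Algebra ℝ R] [CommRing S] [Algebra ℝ S]
    (φ : R →ₐ[ℝ] S) (Y Z : Fin N → R) (p : MvPolynomial (Fin N) ℝ) (M : ℕ) :
    φ (bern Y Z p M) = bern (fun i => φ (Y i)) (fun i => φ (Z i)) p M := by
  simp only [bern, map_sum, map_mul, map_prod, map_pow, AlgHom.commutes]

lemma aeval_pcl {N : ℕ} {y z : Fin N → expType (Fin N)} (h : ∀ i, y i + z i = 1)
    (hy : ∀ i, IsSumSq (y i)) (hz : ∀ i, IsSumSq (z i))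
    {p : MvPolynomial (Fin N) ℝ} (hp : ∀ x, 0 ≤ eval x p) :
    Pcl (aeval (fun i => (y i : MvPowerSeries (Fin N) ℝ)) p) := by
  refine Pcl.limit (bern_conv (Z := fun i => (z i : MvPowerSeries (Fin N) ℝ)) (fun i => ?_)
    (fun i => (y i).2) p) fun M => ?_
  · have := congrArg (fun w : expType (Fin N) => (w : MvPowerSeries (Fin N) ℝ)) (h i)
    simpa using this
  · have := Pcl.of_expType (bern_sos hy hz hp M)
    have e := bern_map (expType (Fin N)).val y z p M
    simp only [Subalgebra.coe_val] at e
    rw [← e]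
    exact this

lemma trig_pcl {N : ℕ} {p : MvPolynomial (Fin N) ℝ} (hp : ∀ x, 0 ≤ eval x p) (n : ℕ) :
    Pcl (aeval (fun i => cM N (tau n) i * dM N (tau n) i) p) := by
  set t := tau n with ht
  have ht0 : t ≠ 0 := (tau_pos n).ne'
  let c : Fin N → expType (Fin N) := fun i => ⟨cM N t i, cM_mem N n i⟩
  let d : Fin N → expType (Fin N) := fun i => ⟨dM N t i, dM_mem N n i⟩
  let am := algebraMap ℝ (expType (Fin N))
  let y : Fin N → expType (Fin N) := fun i => am (1 / 2) * (c i + am t * d i) ^ 2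
  let z : Fin N → expType (Fin N) := fun i => am (1 / 2) * (c i - am t * d i) ^ 2
  have hcd : ∀ i, c i ^ 2 + am (t ^ 2) * d i ^ 2 = 1 := fun i => Subtype.ext (cM_sq_add N t i)
  have hh : am (1 / 2) + am (1 / 2) = 1 := by rw [← map_add]; norm_num
  have hyz : ∀ i, y i + z i = 1 := by
    intro i
    have := hcd i
    rw [map_pow] at this
    simp only [y, z]
    linear_combination (am (1 / 2) + am (1 / 2)) * this + hh
  have hy : ∀ i, IsSumSq (y i) := fun i => (isSumSq_algebraMap (by norm_num)).mul (isSumSq_sq _)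
  have hz : ∀ i, IsSumSq (z i) := fun i => (isSumSq_algebraMap (by norm_num)).mul (isSumSq_sq _)
  let q : MvPolynomial (Fin N) ℝ := aeval (fun i => C (1 / (2 * t)) * (X i + X i - 1)) p
  have hq : ∀ x, 0 ≤ eval x q := by
    intro x
    have : eval x q = eval (fun i => 1 / (2 * t) * (x i + x i - 1)) p := by
      simp only [q]
      rw [← MvPolynomial.coe_aeval_eq_eval, ← MvPolynomial.coe_aeval_eq_eval]
      change aeval x (aeval _ p) = _
      rw [MvPolynomial.comp_aeval_apply]
      simp
    rw [this]; exact hp _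
  have main := aeval_pcl hyz hy hz hq
  have e : aeval (fun i => (y i : MvPowerSeries (Fin N) ℝ)) q =
      aeval (fun i => cM N t i * dM N t i) p := by
    simp only [q]
    rw [MvPolynomial.comp_aeval_apply]
    congr 2
    funext i
    have e1 : algebraMap ℝ (expType (Fin N)) (1 / (2 * t)) * (y i + y i - 1) = c i * d i := by
      have h1 : am (1 / (2 * t)) * (am t) = am (1 / 2) := by
        rw [← map_mul]; congr 1; field_simp
      have h2 : y i + y i - 1 = am t * (c i * d i) + am t * (c i * d i) := by
        have := hyz i
        have h3 : y i - z i = am t * (c i * d i) + am t * (c i * d i) := by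
          simp only [y, z]
          linear_combination (2 * am t * c i * d i) * hh
        linear_combination h3 + this
      rw [h2]
      linear_combination (2 * c i * d i) * h1 + (c i * d i) * hh
    have e2 := congrArg (fun w : expType (Fin N) => (w : MvPowerSeries (Fin N) ℝ)) e1
    simp only [map_mul, map_sub, map_add, aeval_X, map_one, algHom_C]
    simpa using e2
  rwa [e] at main

lemma coe_eq_aeval {N : ℕ} (p : MvPolynomial (Fin N) ℝ) :
    aeval (fun i => (MvPowerSeries.X i : MvPowerSeries (Fin N) ℝ)) p = p := by
  have : aeval (fun i => (MvPowerSeries.X i : MvPowerSeries (Fin N) ℝ)) =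
      MvPolynomial.coeToMvPowerSeries.algHom (σ := Fin N) (R := ℝ) ℝ := by
    apply MvPolynomial.algHom_ext
    intro i
    simp [MvPolynomial.coeToMvPowerSeries.algHom_apply]
  rw [this, MvPolynomial.coeToMvPowerSeries.algHom_apply]
  simp

lemma nonneg_pcl {N : ℕ} {p : MvPolynomial (Fin N) ℝ} (hp : ∀ x, 0 ≤ eval x p) :
    Pcl (p : MvPowerSeries (Fin N) ℝ) := by
  rw [← coe_eq_aeval]
  refine Pcl.limit (h := fun n => aeval (fun i => cM N (tau n) i * dM N (tau n) i) p)
    (Conv.aeval (h := fun i n => cM N (tau n) i * dM N (tau n) i) (fun i => ?_) p)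
    (fun n => trig_pcl hp n)
  simpa using (cM_conv N i).mul (dM_conv N i)

/-- The Lasserre approximation theorem. -/
lemma lasserre {N : ℕ} {p : MvPolynomial (Fin N) ℝ} (hp : ∀ x, 0 ≤ eval x p) {ε : ℝ}
    (hε : 0 < ε) : ∃ r₀, ∀ r, r₀ ≤ r → IsSumSq (p + C ε * theta N r) := by
  rcases Nat.eq_zero_or_pos N with h0 | hN
  · subst h0
    refine ⟨0, fun r _ => ?_⟩
    refine IsSumSq.add ?_ ((isSumSq_C hε.le).mul (theta_sos _ _))
    have h1 := MvPolynomial.eq_C_of_isEmpty p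
    have h2 := hp (fun i => i.elim0)
    rw [h1, eval_C] at h2
    rw [h1]
    exact isSumSq_C h2
  · obtain ⟨q, hq, hn⟩ := nonneg_pcl hp (ε / 2 ^ N) (by positivity)
    have hn' : Near (ε / 2 ^ N) ((p - q : MvPolynomial (Fin N) ℝ) : MvPowerSeries (Fin N) ℝ) := by
      intro α
      have := hn α
      rwa [map_sub, coeff_coe, coeff_coe, ← coeff_sub, ← coeff_coe] at this
    obtain ⟨r₀, hr⟩ := near_sos hN (by positivity) hn'
    rw [div_mul_cancel₀ _ (by positivity)] at hr
    refine ⟨r₀, fun r h => ?_⟩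
    refine isSumSq_of_eq ((hr.add hq).add ((isSumSq_C hε.le).mul (theta_mono h))) ?_
    ring

lemma eval_theta (N r : ℕ) (x : Fin N → ℝ) :
    eval x (theta N r) =
      ∑ k ∈ Finset.range (r + 1), ∑ i : Fin N, (1 : ℝ) / (Nat.factorial k : ℝ) * x i ^ (2 * k) := by
  simp [theta]

lemma theta_lower {N : ℕ} (r : ℕ) (x : Fin N → ℝ) (i : Fin N) :
    (1 : ℝ) / (Nat.factorial r : ℝ) * |x i| ^ (2 * r) ≤ eval x (theta N r) := by
  rw [eval_theta]
  have h0 : ∀ k i, 0 ≤ (1 : ℝ) / (Nat.factorial k : ℝ) * x i ^ (2 * k) := fun k i => by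
    have : 0 ≤ x i ^ (2 * k) := by rw [pow_mul]; positivity
    positivity
  have e : |x i| ^ (2 * r) = x i ^ (2 * r) := by rw [pow_mul, sq_abs, ← pow_mul]
  rw [e]
  refine le_trans ?_ (Finset.single_le_sum (f := fun k => ∑ i : Fin N,
    (1 : ℝ) / (Nat.factorial k : ℝ) * x i ^ (2 * k))
    (fun k _ => Finset.sum_nonneg fun i _ => h0 k i) (Finset.self_mem_range_succ r))
  exact Finset.single_le_sum (f := fun i => (1 : ℝ) / (Nat.factorial r : ℝ) * x i ^ (2 * r))
    (fun i _ => h0 r i) (Finset.mem_univ i)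

lemma theta_pos {N : ℕ} (hN : 0 < N) (r : ℕ) (x : Fin N → ℝ) : 0 < eval x (theta N r) := by
  rw [eval_theta]
  have h0 : ∀ k i, 0 ≤ (1 : ℝ) / (Nat.factorial k : ℝ) * x i ^ (2 * k) := fun k i => by
    have : 0 ≤ x i ^ (2 * k) := by rw [pow_mul]; positivity
    positivity
  refine lt_of_lt_of_le ?_ (Finset.single_le_sum (f := fun k => ∑ i : Fin N,
    (1 : ℝ) / (Nat.factorial k : ℝ) * x i ^ (2 * k))
    (fun k _ => Finset.sum_nonneg fun i _ => h0 k i) (Finset.mem_range.2 (Nat.succ_pos r)))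
  simpa using hN

lemma eval_bound {N : ℕ} (F : MvPolynomial (Fin N) ℝ) (x : Fin N → ℝ) {s : ℝ} (hs : 1 ≤ s)
    (hx : ∀ i, |x i| ≤ s) :
    |eval x F| ≤ (∑ d ∈ F.support, |F.coeff d|) * s ^ F.totalDegree := by
  rw [eval_eq, Finset.sum_mul]
  refine (Finset.abs_sum_le_sum_abs _ _).trans (Finset.sum_le_sum fun d hd => ?_)
  rw [abs_mul]
  refine mul_le_mul_of_nonneg_left ?_ (abs_nonneg _)
  rw [Finset.abs_prod]
  calc ∏ i ∈ d.support, |x i ^ d i| ≤ ∏ i ∈ d.support, s ^ d i := by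
        refine Finset.prod_le_prod (fun i _ => abs_nonneg _) fun i _ => ?_
        rw [abs_pow]
        exact pow_le_pow_left₀ (abs_nonneg _) (hx i) _
    _ = s ^ (d.sum fun _ e => e) := by
        rw [Finset.prod_pow_eq_pow_sum]; rfl
    _ ≤ _ := pow_le_pow_right₀ hs (le_totalDegree hd)

lemma growth {N : ℕ} (hN : 0 < N) (F : MvPolynomial (Fin N) ℝ) {δ : ℝ} (hδ : 0 < δ) :
    ∃ (r : ℕ) (R : ℝ), ∀ x : Fin N → ℝ, R < ‖x‖ → 0 < eval x F + δ * eval x (theta N r) := by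
  set D := F.totalDegree with hD
  set B := ∑ d ∈ F.support, |F.coeff d| with hB
  have hB0 : 0 ≤ B := Finset.sum_nonneg fun _ _ => abs_nonneg _
  refine ⟨D + 1, max 1 (B * (D + 1).factorial / δ), fun x hx => ?_⟩
  have hs1 : 1 < ‖x‖ := (le_max_left _ _).trans_lt hx
  have hs2 : B * (D + 1).factorial / δ < ‖x‖ := (le_max_right _ _).trans_lt hx
  have hfac : (0 : ℝ) < ((D + 1).factorial : ℝ) := by positivity
  have hb := eval_bound F x hs1.le (fun i => norm_le_pi_norm x i)
  have : Nonempty (Fin N) := ⟨⟨0, hN⟩⟩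
  obtain ⟨i, _, hi⟩ := Finset.exists_max_image Finset.univ (fun i => |x i|) Finset.univ_nonempty
  have hi' : ‖x‖ ≤ |x i| :=
    (pi_norm_le_iff_of_nonneg (abs_nonneg _)).2 fun j => hi j (Finset.mem_univ j)
  have ht := theta_lower (D + 1) x i
  have ht2 : (1 : ℝ) / ((D + 1).factorial : ℝ) * ‖x‖ ^ (2 * (D + 1)) ≤
      eval x (theta N (D + 1)) := by
    refine le_trans ?_ ht
    gcongr
  set s := ‖x‖
  rw [div_lt_iff₀ hδ] at hs2
  have key : B * s ^ D < δ * ((1 : ℝ) / ((D + 1).factorial : ℝ) * s ^ (2 * (D + 1))) := by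
    have h1 : B * (D + 1).factorial * s ^ D < s * δ * s ^ D :=
      mul_lt_mul_of_pos_right hs2 (by positivity)
    have h2 : s * δ * s ^ D ≤ δ * s ^ (2 * (D + 1)) := by
      have : s ^ (D + 1) ≤ s ^ (2 * (D + 1)) := pow_le_pow_right₀ hs1.le (by omega)
      calc s * δ * s ^ D = δ * s ^ (D + 1) := by ring
        _ ≤ _ := mul_le_mul_of_nonneg_left this hδ.le
    have e : δ * ((1 : ℝ) / ((D + 1).factorial : ℝ) * s ^ (2 * (D + 1))) =
        δ * s ^ (2 * (D + 1)) / ((D + 1).factorial : ℝ) := by ring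
    rw [e, lt_div_iff₀ hfac]
    linarith
  have h3 := mul_le_mul_of_nonneg_left ht2 hδ.le
  have h4 := (abs_le.1 hb).1
  linarith

lemma penalty {N : ℕ} {G H : (Fin N → ℝ) → ℝ} (hG : Continuous G) (hH : Continuous H)
    (hH0 : ∀ x, 0 ≤ H x) (hGH : ∀ x, H x = 0 → 0 < G x) {R : ℝ}
    (hR : ∀ x, R < ‖x‖ → 0 < G x) : ∃ l : ℝ, 0 ≤ l ∧ ∀ x, 0 ≤ G x + l * H x := by
  let A : Set (Fin N → ℝ) := Metric.closedBall 0 R ∩ {x | G x ≤ 0}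
  have hA : IsCompact A :=
    (isCompact_closedBall 0 R).inter_right (isClosed_le hG continuous_const)
  have hout : ∀ x, x ∉ A → 0 < G x := by
    intro x hx
    by_contra hc
    push Not at hc
    refine hx ⟨?_, hc⟩
    rw [mem_closedBall_zero_iff]
    by_contra hlt
    push Not at hlt
    exact absurd (hR x hlt) (not_lt.2 hc)
  rcases A.eq_empty_or_nonempty with he | hne
  · refine ⟨0, le_rfl, fun x => ?_⟩
    have := hout x (by rw [he]; exact Set.notMem_empty x)
    linarith
  · obtain ⟨a, haA, ha⟩ := hA.exists_isMinOn hne hH.continuousOn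
    obtain ⟨b, hbA, hb⟩ := hA.exists_isMinOn hne hG.continuousOn
    have hapos : 0 < H a := by
      refine lt_of_le_of_ne (hH0 a) fun h => ?_
      exact absurd (hGH a h.symm) (not_lt.2 haA.2)
    have hb0 : G b ≤ 0 := hbA.2
    have hl : 0 ≤ -G b / H a := div_nonneg (by linarith) hapos.le
    refine ⟨-G b / H a, hl, fun x => ?_⟩
    by_cases hx : x ∈ A
    · have h1 : H a ≤ H x := ha hx
      have h2 : G b ≤ G x := hb hx
      have h3 := mul_le_mul_of_nonneg_left h1 hl
      rw [div_mul_cancel₀ _ hapos.ne'] at h3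
      linarith
    · have := hout x hx
      have := mul_nonneg hl (hH0 x)
      linarith

lemma theta_split (n m r : ℕ) :
    rename (Fin.castAdd m) (theta n r) + rename (Fin.natAdd n) (theta m r) = theta (n + m) r := by
  simp only [theta, map_sum, map_mul, map_pow, rename_C, rename_X, Fin.sum_univ_add,
    Finset.sum_add_distrib]

theorem sos_approx_on_semialgebraic_set (n m : ℕ)
    (g : Fin m → MvPolynomial (Fin n) ℝ) (f : MvPolynomial (Fin n) ℝ)
    (hf : ∀ x : Fin n → ℝ, (∀ j, 0 ≤ eval x (g j)) → 0 ≤ eval x f) :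
    ∀ ε : ℝ, 0 < ε →
      ∃ (lam : Fin m → ℝ), (∀ j, 0 ≤ lam j) ∧
        ∃ r₀ : ℕ, ∀ r : ℕ, r₀ ≤ r →
          IsSOS (rename (Fin.castAdd m) f
            + C ε * rename (Fin.castAdd m) (theta n r)
            + C ε * rename (Fin.natAdd n) (theta m r)
            + ∑ j, C (lam j) *
                (rename (Fin.castAdd m) (g j) - X (Fin.natAdd n j) ^ 2) ^ 2) := by
  intro ε hε
  set F : MvPolynomial (Fin (n + m)) ℝ := rename (Fin.castAdd m) f with hF
  set h : Fin m → MvPolynomial (Fin (n + m)) ℝ :=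
    fun j => rename (Fin.castAdd m) (g j) - X (Fin.natAdd n j) ^ 2 with hh
  have hzero : ∀ x : Fin (n + m) → ℝ, (∀ j, eval x (h j) = 0) → 0 ≤ eval x F := by
    intro x hx
    rw [hF, eval_rename]
    apply hf
    intro j
    have := hx j
    simp only [hh, map_sub, map_pow, eval_X, eval_rename] at this
    have h2 := sq_nonneg (x (Fin.natAdd n j))
    linarith
  suffices hs : ∃ (l : ℝ) (r₁ : ℕ), 0 ≤ l ∧ ∀ x, 0 ≤ eval x
      (F + C (ε / 2) * theta (n + m) r₁ + ∑ j, C l * h j ^ 2) by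
    obtain ⟨l, r₁, hl, hpos⟩ := hs
    obtain ⟨r₀, hr⟩ := lasserre hpos (half_pos hε)
    refine ⟨fun _ => l, fun _ => hl, max r₀ r₁, fun r hrr => ?_⟩
    apply IsSumSq.isSOS
    refine isSumSq_of_eq ((hr r ((le_max_left _ _).trans hrr)).add
      ((isSumSq_C (half_pos hε).le).mul (theta_mono ((le_max_right _ _).trans hrr)))) ?_
    have e1 : (C ε : MvPolynomial (Fin (n + m)) ℝ) = C (ε / 2) + C (ε / 2) := by
      rw [← C_add, add_halves]
    rw [← theta_split n m r, e1]
    ring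
  rcases Nat.eq_zero_or_pos (n + m) with h0 | hN
  · refine ⟨0, 0, le_rfl, fun x => ?_⟩
    have hm : m = 0 := by omega
    subst hm
    have h1 := hzero x (fun j => j.elim0)
    have hth : 0 ≤ eval x (theta (n + 0) 0) := by
      rw [eval_theta]
      exact Finset.sum_nonneg fun k _ => Finset.sum_nonneg fun i _ => by
        have : 0 ≤ x i ^ (2 * k) := by rw [pow_mul]; positivity
        positivity
    have h2 := mul_nonneg (half_pos hε).le hth
    simp only [map_add, map_mul, eval_C, Finset.univ_eq_empty, Finset.sum_empty, map_zero]
    linarith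
  · obtain ⟨r₁, R, hR⟩ := growth hN F (half_pos hε)
    obtain ⟨l, hl, hpos⟩ := penalty
      (G := fun x => eval x F + ε / 2 * eval x (theta (n + m) r₁))
      (H := fun x => ∑ j, eval x (h j) ^ 2)
      ((MvPolynomial.continuous_eval F).add
        (continuous_const.mul (MvPolynomial.continuous_eval _)))
      (continuous_finsetSum _ fun j _ => (MvPolynomial.continuous_eval (h j)).pow 2)
      (fun x => Finset.sum_nonneg fun j _ => sq_nonneg _)
      (fun x hx => by
        have h1 := (Finset.sum_eq_zero_iff_of_nonneg (fun j _ => sq_nonneg _)).1 hx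
        have h2 := hzero x fun j => pow_eq_zero_iff (two_ne_zero) |>.1 (h1 j (Finset.mem_univ j))
        have h3 := mul_pos (half_pos hε) (theta_pos hN r₁ x)
        change 0 < eval x F + ε / 2 * eval x (theta (n + m) r₁)
        linarith) hR
    refine ⟨l, r₁, hl, fun x => ?_⟩
    have := hpos x
    simpa [Finset.mul_sum] using this
end

section
/- Let g_1,…,g_m, f ∈ ℝ[x_1,…,x_n], let V = {x ∈ ℝ^n : g_j(x) = 0 for j = 1,…,m}, and let M > 0 be large enough that B_M ∩ V ≠ ∅. Let r ∈ ℕ satisfy 2r > max(deg f, deg g_j^2 for all j). Call a Borel probability measure μ on ℝ^n feasible if f, θ_r and each g_j^2 are μ-integrable, ∫ g_j^2 dμ ≤ 0 for all j, and ∫ θ_r dμ ≤ n·e^{M²}; call a triple (λ, δ, γ) ∈ ℝ_+^m × ℝ_+ × ℝ dually feasible if f(x) + δ·θ_r(x) + ∑_{j=1}^m λ_j·g_j(x)^2 ≥ γ for all x ∈ ℝ^n. Then there exists a feasible measure μ* attaining the minimum of ∫ f dμ over feasible μ, and this minimum equals the supremum of γ − n·δ·e^{M²} over dually feasible triples (λ,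 δ, γ). -/
open MvPolynomial MeasureTheory Filter Topology

/-- Feasibility for the moment problem `𝒫_M^r`: `μ` is a Borel probability measure with
`f`, `θ_r` and each `g_j^2` integrable, `∫ g_j^2 dμ ≤ 0` and `∫ θ_r dμ ≤ n e^{M²}`. -/
def PFeas (n m : ℕ) (g : Fin m → MvPolynomial (Fin n) ℝ) (f : MvPolynomial (Fin n) ℝ)
    (r : ℕ) (M : ℝ) (μ : Measure (Fin n → ℝ)) : Prop :=
  IsProbabilityMeasure μ ∧
  Integrable (fun x => eval x f) μ ∧
  Integrable (fun x => eval x (theta n r)) μ ∧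
  (∀ j, Integrable (fun x => (eval x (g j)) ^ 2) μ) ∧
  (∀ j, (∫ x, (eval x (g j)) ^ 2 ∂μ) ≤ 0) ∧
  (∫ x, eval x (theta n r) ∂μ) ≤ (n : ℝ) * Real.exp (M ^ 2)

/-- The optimal value `inf 𝒫_M^r` of the moment problem. -/
noncomputable def infP (n m : ℕ) (g : Fin m → MvPolynomial (Fin n) ℝ)
    (f : MvPolynomial (Fin n) ℝ) (r : ℕ) (M : ℝ) : ℝ :=
  sInf {v | ∃ μ : Measure (Fin n → ℝ), PFeas n m g f r M μ ∧ v = ∫ x, eval x f ∂μ}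


theorem compact_convexHull_aux {E : Type*} [NormedAddCommGroup E] [NormedSpace ℝ E]
    [FiniteDimensional ℝ E] {s : Set E} (hs : IsCompact s) : IsCompact (convexHull ℝ s) := by
  have key : convexHull ℝ s = ⋃ k ∈ Finset.range (Module.finrank ℝ E + 2),
      (fun p : (Fin k → ℝ) × (Fin k → E) => ∑ i, p.1 i • p.2 i) ''
        ((stdSimplex ℝ (Fin k)) ×ˢ (Set.univ.pi fun _ => s)) := by
    apply Set.Subset.antisymm
    · intro x hx
      obtain ⟨ι, _, z, w, hz, hai, hw, hw1, hx⟩ := eq_pos_convex_span_of_mem_convexHull hx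
      have hc : Fintype.card ι ≤ Module.finrank ℝ E + 1 := by
        refine (hai.card_le_finrank_succ).trans ?_
        gcongr
        exact Submodule.finrank_le _
      simp only [Set.mem_iUnion]
      refine ⟨Fintype.card ι, Finset.mem_range.2 (by omega), ?_⟩
      let e := (Fintype.equivFin ι).symm
      refine ⟨(fun i => w (e i), fun i => z (e i)), ⟨⟨fun i => (hw _).le, ?_⟩, ?_⟩, ?_⟩
      · rw [← hw1]; exact e.sum_comp w
      · intro i _; exact hz ⟨_, rfl⟩
      · rw [← hx]; exact e.sum_comp (fun i => w i • z i)
    · simp only [Set.iUnion_subset_iff]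
      rintro k - _ ⟨⟨w, z⟩, ⟨hw, hz⟩, rfl⟩
      exact (convex_convexHull ℝ s).sum_mem (fun i _ => hw.1 i) hw.2
        (fun i _ => subset_convexHull ℝ s (hz i trivial))
  rw [key]
  refine (Finset.range _).isCompact_biUnion fun k _ => ?_
  refine IsCompact.image ((isCompact_stdSimplex ℝ (Fin k)).prod (isCompact_univ_pi fun _ => hs)) ?_
  fun_prop

theorem theta_eval (n r : ℕ) (x : Fin n → ℝ) :
    eval x (theta n r) = ∑ k ∈ Finset.range (r + 1), ∑ i : Fin n,
      1 / (Nat.factorial k : ℝ) * x i ^ (2 * k) := by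
  simp [theta]

theorem theta_nonneg (n r : ℕ) (x : Fin n → ℝ) : 0 ≤ eval x (theta n r) := by
  rw [theta_eval]
  refine Finset.sum_nonneg fun k _ => Finset.sum_nonneg fun i _ => ?_
  rw [pow_mul]; positivity

theorem theta_le (n r : ℕ) (M : ℝ) (x : Fin n → ℝ) (hx : ‖x‖ ≤ M) :
    eval x (theta n r) ≤ (n : ℝ) * Real.exp (M ^ 2) := by
  rw [theta_eval, Finset.sum_comm]
  have : ∀ i : Fin n, ∑ k ∈ Finset.range (r + 1), 1 / (Nat.factorial k : ℝ) * x i ^ (2 * k)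
      ≤ Real.exp (M ^ 2) := by
    intro i
    have h1 : x i ^ 2 ≤ M ^ 2 := by
      rw [← sq_abs (x i)]
      have := (norm_le_pi_norm x i).trans hx
      rw [Real.norm_eq_abs] at this
      gcongr
    refine le_trans ?_ ((Real.sum_le_exp_of_nonneg (sq_nonneg (x i)) (r+1)).trans
      (Real.exp_le_exp.2 h1))
    apply le_of_eq
    refine Finset.sum_congr rfl fun k _ => ?_
    rw [pow_mul]; ring
  calc _ ≤ ∑ i : Fin n, Real.exp (M ^ 2) := Finset.sum_le_sum fun i _ => this i
    _ = _ := by simp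

theorem theta_ge (n r : ℕ) (hr : 0 < r) (x : Fin n → ℝ) :
    (1 + ‖x‖) ^ (2 * r) ≤ (2 ^ (2 * r) * (Nat.factorial r : ℝ)) * (1 + eval x (theta n r)) := by
  have hf : (1:ℝ) ≤ Nat.factorial r := by exact_mod_cast Nat.one_le_iff_ne_zero.2 (Nat.factorial_ne_zero r)
  have h0 := theta_nonneg n r x
  have h1 : ‖x‖ ^ (2 * r) ≤ Nat.factorial r * eval x (theta n r) := by
    rcases isEmpty_or_nonempty (Fin n) with he | he
    · have : ‖x‖ = 0 := by rw [Subsingleton.elim x 0, norm_zero]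
      rw [this, zero_pow (by omega)]; positivity
    · obtain ⟨i, hi⟩ := Finite.exists_max (fun i => ‖x i‖)
      have h2 : ‖x‖ ≤ ‖x i‖ := (pi_norm_le_iff_of_nonneg (norm_nonneg _)).2 hi
      have h3 : 1 / (Nat.factorial r : ℝ) * x i ^ (2 * r) ≤ eval x (theta n r) := by
        rw [theta_eval]
        refine le_trans ?_ (Finset.single_le_sum (f := fun k => ∑ i : Fin n,
          1 / (Nat.factorial k : ℝ) * x i ^ (2 * k)) (fun k _ => Finset.sum_nonneg fun i _ => ?_)
          (Finset.mem_range.2 (Nat.lt_succ_self r)))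
        · refine Finset.single_le_sum (f := fun i : Fin n =>
            1 / (Nat.factorial r : ℝ) * x i ^ (2 * r)) (fun i _ => ?_) (Finset.mem_univ i)
          rw [pow_mul]; positivity
        · rw [pow_mul]; positivity
      calc ‖x‖ ^ (2 * r) ≤ ‖x i‖ ^ (2 * r) := by gcongr
        _ = x i ^ (2 * r) := by rw [pow_mul, pow_mul, Real.norm_eq_abs, sq_abs]
        _ = Nat.factorial r * (1 / (Nat.factorial r : ℝ) * x i ^ (2 * r)) := by field_simp
        _ ≤ _ := by gcongr
  have h2 : (1 + ‖x‖) ^ (2 * r) ≤ 2 ^ (2 * r) * (1 + ‖x‖ ^ (2 * r)) := by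
    rcases le_total ‖x‖ 1 with h | h
    · calc (1 + ‖x‖) ^ (2 * r) ≤ 2 ^ (2 * r) := by gcongr; linarith
        _ ≤ _ := le_mul_of_one_le_right (by positivity) (by simp)
    · calc (1 + ‖x‖) ^ (2 * r) ≤ (2 * ‖x‖) ^ (2 * r) := by gcongr; linarith
        _ = 2 ^ (2 * r) * ‖x‖ ^ (2 * r) := mul_pow _ _ _
        _ ≤ _ := by gcongr; linarith
  refine h2.trans ?_
  rw [mul_assoc]
  gcongr
  nlinarith

theorem poly_bound (n d : ℕ) (p : MvPolynomial (Fin n) ℝ) (hp : p.totalDegree ≤ d) :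
    ∃ K : ℝ, 0 ≤ K ∧ ∀ x : Fin n → ℝ, |eval x p| ≤ K * (1 + ‖x‖) ^ d := by
  refine ⟨∑ a ∈ p.support, |p.coeff a|, Finset.sum_nonneg fun _ _ => abs_nonneg _, fun x => ?_⟩
  rw [eval_eq', Finset.sum_mul]
  refine (Finset.abs_sum_le_sum_abs _ _).trans (Finset.sum_le_sum fun a ha => ?_)
  rw [abs_mul, Finset.abs_prod]
  gcongr
  have hd : ∑ i, a i ≤ d := by
    refine le_trans ?_ ((le_totalDegree ha).trans hp)
    rw [Finsupp.sum_fintype]; simp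
  have h1 : (1:ℝ) ≤ 1 + ‖x‖ := by simp
  calc ∏ i, |x i ^ a i| ≤ ∏ i, (1 + ‖x‖) ^ a i := by
        refine Finset.prod_le_prod (fun _ _ => abs_nonneg _) fun i _ => ?_
        rw [abs_pow]
        gcongr
        have := norm_le_pi_norm x i
        rw [Real.norm_eq_abs] at this
        linarith
    _ = (1 + ‖x‖) ^ (∑ i, a i) := Finset.prod_pow_eq_pow_sum _ _ _
    _ ≤ _ := pow_le_pow_right₀ h1 hd

theorem poly_tendsto (n r : ℕ) (p : MvPolynomial (Fin n) ℝ) (hp : p.totalDegree < 2 * r) :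
    Tendsto (fun x : Fin n → ℝ => eval x p / (1 + eval x (theta n r)))
      (cocompact (Fin n → ℝ)) (𝓝 0) := by
  obtain ⟨K, hK, hb⟩ := poly_bound n (2 * r - 1) p (by omega)
  set c : ℝ := 2 ^ (2 * r) * (Nat.factorial r : ℝ) with hc
  have hlim : Tendsto (fun x : Fin n → ℝ => K * c / (1 + ‖x‖)) (cocompact (Fin n → ℝ)) (𝓝 0) :=
    Tendsto.div_atTop tendsto_const_nhds
      (tendsto_atTop_add_const_left _ _ (tendsto_norm_cocompact_atTop))
  refine squeeze_zero_norm (fun x => ?_) hlim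
  have h0 := theta_nonneg n r x
  have h1 := theta_ge n r (by omega) x
  rw [← hc] at h1
  have hx := norm_nonneg x
  rw [Real.norm_eq_abs, abs_div, abs_of_pos (a := 1 + eval x (theta n r)) (by linarith),
    div_le_div_iff₀ (by linarith) (by linarith)]
  calc |eval x p| * (1 + ‖x‖) ≤ K * (1 + ‖x‖) ^ (2 * r - 1) * (1 + ‖x‖) := by gcongr; exact hb x
    _ = K * (1 + ‖x‖) ^ (2 * r) := by
        rw [mul_assoc, ← pow_succ]; congr 2; omega
    _ ≤ K * (c * (1 + eval x (theta n r))) := by gcongr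
    _ = _ := by ring

/-- Vectors of generalized moments of finite measures, with slack in the `θ` coordinate. -/
def momentSet (n m : ℕ) (g : Fin m → MvPolynomial (Fin n) ℝ) (f : MvPolynomial (Fin n) ℝ)
    (r : ℕ) : Set (ℝ × ℝ × ℝ × (Fin m → ℝ)) :=
  {z | ∃ μ : Measure (Fin n → ℝ), IsFiniteMeasure μ ∧
    Integrable (fun x => eval x f) μ ∧ Integrable (fun x => eval x (theta n r)) μ ∧
    (∀ j, Integrable (fun x => (eval x (g j)) ^ 2) μ) ∧
    z.1 = ∫ x, eval x f ∂μ ∧ (∫ x, eval x (theta n r) ∂μ) ≤ z.2.1 ∧ z.2.2.1 = μ.real Set.univ ∧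
    ∀ j, z.2.2.2 j = ∫ x, (eval x (g j)) ^ 2 ∂μ}

theorem momentSet_convex (n m : ℕ) (g : Fin m → MvPolynomial (Fin n) ℝ)
    (f : MvPolynomial (Fin n) ℝ) (r : ℕ) : Convex ℝ (momentSet n m g f r) := by
  rintro z ⟨μ, hμ, hf, ht, hg, z1, z2, z3, z4⟩ y ⟨ν, hν, kf, kt, kg, y1, y2, y3, y4⟩ a b ha hb hab
  have ia : ∀ {h : (Fin n → ℝ) → ℝ}, Integrable h μ → Integrable h (ENNReal.ofReal a • μ) :=
    fun h => h.smul_measure ENNReal.ofReal_ne_top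
  have ib : ∀ {h : (Fin n → ℝ) → ℝ}, Integrable h ν → Integrable h (ENNReal.ofReal b • ν) :=
    fun h => h.smul_measure ENNReal.ofReal_ne_top
  have key : ∀ {h : (Fin n → ℝ) → ℝ}, Integrable h μ → Integrable h ν →
      ∫ x, h x ∂(ENNReal.ofReal a • μ + ENNReal.ofReal b • ν) =
        a * ∫ x, h x ∂μ + b * ∫ x, h x ∂ν := by
    intro h h1 h2
    rw [integral_add_measure (ia h1) (ib h2), integral_smul_measure, integral_smul_measure,
      ENNReal.toReal_ofReal ha, ENNReal.toReal_ofReal hb, smul_eq_mul, smul_eq_mul]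
  have : IsFiniteMeasure (ENNReal.ofReal a • μ) := Measure.smul_finite _ ENNReal.ofReal_ne_top
  have : IsFiniteMeasure (ENNReal.ofReal b • ν) := Measure.smul_finite _ ENNReal.ofReal_ne_top
  refine ⟨ENNReal.ofReal a • μ + ENNReal.ofReal b • ν, inferInstance, (ia hf).add_measure (ib kf),
    (ia ht).add_measure (ib kt), fun j => (ia (hg j)).add_measure (ib (kg j)), ?_, ?_, ?_, ?_⟩
  · rw [key hf kf, ← z1, ← y1]; simp
  · rw [key ht kt]
    simp only [Prod.snd_add, Prod.fst_add, Prod.smul_snd, Prod.smul_fst, smul_eq_mul]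
    gcongr
  · have := key (h := fun _ => (1:ℝ)) (integrable_const _) (integrable_const _)
    simp only [integral_const, smul_eq_mul, mul_one] at this
    rw [this, ← z3, ← y3]; simp
  · intro j
    rw [key (hg j) (kg j), ← z4, ← y4]; simp

theorem poly_cont (n : ℕ) (p : MvPolynomial (Fin n) ℝ) :
    Continuous (fun x : Fin n → ℝ => eval x p) := MvPolynomial.continuous_eval p

/-- Normalized generating curve. -/
noncomputable def phi (n m : ℕ) (g : Fin m → MvPolynomial (Fin n) ℝ)
    (f : MvPolynomial (Fin n) ℝ) (r : ℕ) (x : Fin n → ℝ) : ℝ × ℝ × ℝ × (Fin m → ℝ) :=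
  (eval x f / (1 + eval x (theta n r)), eval x (theta n r) / (1 + eval x (theta n r)),
    1 / (1 + eval x (theta n r)), fun j => (eval x (g j)) ^ 2 / (1 + eval x (theta n r)))

theorem phi_mem (n m : ℕ) (g : Fin m → MvPolynomial (Fin n) ℝ)
    (f : MvPolynomial (Fin n) ℝ) (r : ℕ) (T : ℝ) (hT : 0 ≤ T) (x : Fin n → ℝ) :
    T • phi n m g f r x ∈ momentSet n m g f r := by
  have h0 := theta_nonneg n r x
  have hc : 0 ≤ T / (1 + eval x (theta n r)) := by positivity
  have key : ∀ h : (Fin n → ℝ) → ℝ, Continuous h →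
      ∫ y, h y ∂(ENNReal.ofReal (T / (1 + eval x (theta n r))) • Measure.dirac x) =
        T / (1 + eval x (theta n r)) * h x := by
    intro h _
    rw [integral_smul_measure, integral_dirac, ENNReal.toReal_ofReal hc, smul_eq_mul]
  have ki : ∀ h : (Fin n → ℝ) → ℝ, Continuous h →
      Integrable h (ENNReal.ofReal (T / (1 + eval x (theta n r))) • Measure.dirac x) := by
    intro h _
    exact (integrable_dirac (by simp)).smul_measure ENNReal.ofReal_ne_top
  have : IsFiniteMeasure (ENNReal.ofReal (T / (1 + eval x (theta n r))) • Measure.dirac x) :=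
    Measure.smul_finite _ ENNReal.ofReal_ne_top
  refine ⟨ENNReal.ofReal (T / (1 + eval x (theta n r))) • Measure.dirac x, this,
    ki _ (poly_cont n f), ki _ (poly_cont n _), fun j => ki _ ((poly_cont n _).pow 2), ?_, ?_, ?_, ?_⟩
  · rw [key _ (poly_cont n f)]; simp [phi]; ring
  · rw [key _ (poly_cont n _)]; apply le_of_eq; simp [phi]; ring
  · have := key (fun _ => (1:ℝ)) continuous_const
    simp only [integral_const, smul_eq_mul, mul_one] at this
    rw [this]; simp [phi]; ring
  · intro j
    rw [key (fun y => (eval y (g j)) ^ 2) ((poly_cont n _).pow 2)]; simp [phi]; ring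

theorem phi_compact (n m : ℕ) (g : Fin m → MvPolynomial (Fin n) ℝ)
    (f : MvPolynomial (Fin n) ℝ) (r : ℕ)
    (hdf : f.totalDegree < 2 * r) (hdg : ∀ j, ((g j) ^ 2).totalDegree < 2 * r) :
    IsCompact (insert ((0 : ℝ), (1 : ℝ), (0 : ℝ), (0 : Fin m → ℝ))
      (Set.range (phi n m g f r))) := by
  have hpos : ∀ x : Fin n → ℝ, 1 + eval x (theta n r) ≠ 0 := fun x => by
    have := theta_nonneg n r x; positivity
  have hone := poly_tendsto n r (1 : MvPolynomial (Fin n) ℝ)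
    (by rw [totalDegree_one]; omega)
  simp only [map_one] at hone
  have hth : Tendsto (fun x : Fin n → ℝ => eval x (theta n r) / (1 + eval x (theta n r)))
      (cocompact (Fin n → ℝ)) (𝓝 1) := by
    have := hone.const_sub 1
    rw [sub_zero] at this
    refine this.congr fun x => ?_
    have := hpos x
    field_simp
    ring
  refine Tendsto.isCompact_insert_range_of_cocompact ?_ ?_
  · refine (poly_tendsto n r f hdf).prodMk_nhds (hth.prodMk_nhds (hone.prodMk_nhds ?_))
    refine tendsto_pi_nhds.2 fun j => ?_
    have := poly_tendsto n r _ (hdg j)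
    simpa using this
  · have hc := (continuous_const (y := (1:ℝ))).add (poly_cont n (theta n r))
    exact ((poly_cont n f).div hc hpos).prodMk (((poly_cont n _).div hc hpos).prodMk
      ((continuous_const.div hc hpos).prodMk
        (continuous_pi fun j => (((poly_cont n (g j)).pow 2).div hc hpos))))

theorem weak_duality (n m : ℕ) (g : Fin m → MvPolynomial (Fin n) ℝ)
    (f : MvPolynomial (Fin n) ℝ) (r : ℕ) (M : ℝ) (μ : Measure (Fin n → ℝ))
    (hμ : PFeas n m g f r M μ) (lam : Fin m → ℝ) (δ γ : ℝ) (hl : ∀ j, 0 ≤ lam j) (hδ : 0 ≤ δ)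
    (h : ∀ x : Fin n → ℝ,
      γ ≤ eval x f + δ * eval x (theta n r) + ∑ j, lam j * (eval x (g j)) ^ 2) :
    γ - (n : ℝ) * δ * Real.exp (M ^ 2) ≤ ∫ x, eval x f ∂μ := by
  obtain ⟨hp, hf, ht, hg, hg0, ht0⟩ := hμ
  have i2 := ht.const_mul δ
  have i3 : Integrable (fun x => ∑ j, lam j * (eval x (g j)) ^ 2) μ :=
    integrable_finsetSum _ fun j _ => (hg j).const_mul (lam j)
  have h1 := integral_mono (integrable_const γ) ((hf.add i2).add i3) h
  rw [integral_const, integral_add' (hf.add i2) i3, integral_add' hf i2,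
    integral_finsetSum _ fun j _ => (hg j).const_mul (lam j)] at h1
  simp only [integral_const_mul, probReal_univ, one_smul] at h1
  have h2 : ∑ j, lam j * ∫ x, (eval x (g j)) ^ 2 ∂μ ≤ 0 :=
    Finset.sum_nonpos fun j _ => mul_nonpos_of_nonneg_of_nonpos (hl j) (hg0 j)
  have h3 := mul_le_mul_of_nonneg_left ht0 hδ
  nlinarith

theorem slope_nonpos {v A a : ℝ} (h : ∀ t : ℝ, 0 ≤ t → v < A - a * t) : a ≤ 0 := by
  by_contra ha
  push Not at ha
  have h0 := h 0 le_rfl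
  have h1 := h ((A - v) / a) (div_nonneg (by linarith) ha.le)
  rw [mul_div_cancel₀ _ ha.ne'] at h1
  linarith

theorem functional_decomp {m : ℕ} (l : StrongDual ℝ (ℝ × ℝ × ℝ × (Fin m → ℝ))) :
    ∃ (a b e : ℝ) (c : Fin m → ℝ), ∀ z, l z = a * z.1 + b * z.2.1 + e * z.2.2.1
      + ∑ j, c j * z.2.2.2 j := by
  refine ⟨l (1, 0, 0, 0), l (0, 1, 0, 0), l (0, 0, 1, 0), fun j => l (0, 0, 0, Pi.single j 1), ?_⟩
  rintro ⟨z1, z2, z3, z4⟩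
  have : ((z1, z2, z3, z4) : ℝ × ℝ × ℝ × (Fin m → ℝ)) =
      z1 • (1, 0, 0, 0) + z2 • (0, 1, 0, 0) + z3 • (0, 0, 1, 0)
        + ∑ j, z4 j • ((0, 0, 0, Pi.single j 1) : ℝ × ℝ × ℝ × (Fin m → ℝ)) := by
    refine Prod.ext ?_ (Prod.ext ?_ (Prod.ext ?_ ?_))
    · simp [Prod.fst_sum]
    · simp [Prod.fst_sum, Prod.snd_sum]
    · simp [Prod.fst_sum, Prod.snd_sum]
    · funext i
      simp [Prod.snd_sum, Finset.sum_apply, Pi.single_apply]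
  rw [this]
  simp only [map_add, map_sum, map_smul, smul_eq_mul]
  rw [← this]
  simp only [mul_comm]

theorem strong_step (n m : ℕ) (g : Fin m → MvPolynomial (Fin n) ℝ)
    (f : MvPolynomial (Fin n) ℝ) (r : ℕ) (R q : ℝ) (hR : 0 ≤ R)
    (x0 : Fin n → ℝ) (hx0 : eval x0 (theta n r) ≤ R) (hg0 : ∀ j, eval x0 (g j) = 0)
    (D : Set (ℝ × ℝ × ℝ × (Fin m → ℝ))) (hD : IsCompact D) (hDc : Convex ℝ D) (h0 : 0 ∈ D)
    (hphi : ∀ x, (R + 1) • phi n m g f r x ∈ D)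
    (hq : ∀ z ∈ D, z.2.1 ≤ R → z.2.2.1 = 1 → (∀ j, z.2.2.2 j ≤ 0) → q < z.1) :
    ∃ (lam : Fin m → ℝ) (δ γ : ℝ), (∀ j, 0 ≤ lam j) ∧ 0 ≤ δ ∧
          (∀ x : Fin n → ℝ,
            γ ≤ eval x f + δ * eval x (theta n r) + ∑ j, lam j * (eval x (g j)) ^ 2) ∧
          q ≤ γ - δ * R := by
  set Q : Set (ℝ × ℝ × ℝ × (Fin m → ℝ)) :=
    {z | z.1 ≤ q ∧ z.2.1 ≤ R ∧ z.2.2.1 = 1 ∧ ∀ j, z.2.2.2 j ≤ 0} with hQ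
  have hQc : Convex ℝ Q := by
    rintro z ⟨z1, z2, z3, z4⟩ y ⟨y1, y2, y3, y4⟩ s t hs ht hst
    refine ⟨?_, ?_, ?_, fun j => ?_⟩ <;>
      simp only [Prod.snd_add, Prod.fst_add, Prod.smul_snd, Prod.smul_fst, smul_eq_mul,
        Pi.add_apply, Pi.smul_apply]
    · calc _ ≤ s * q + t * q := by gcongr
        _ = q := by rw [← add_mul, hst, one_mul]
    · calc _ ≤ s * R + t * R := by gcongr
        _ = R := by rw [← add_mul, hst, one_mul]
    · rw [z3, y3, mul_one, mul_one, hst]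
    · have := mul_nonpos_of_nonneg_of_nonpos hs (z4 j)
      have := mul_nonpos_of_nonneg_of_nonpos ht (y4 j)
      linarith
  have hQcl : IsClosed Q := by
    have e : Q = {z | z.1 ≤ q} ∩ ({z | z.2.1 ≤ R} ∩ ({z | z.2.2.1 = 1} ∩
        ⋂ j, {z | z.2.2.2 j ≤ 0})) := by
      ext z; simp [hQ]
    rw [e]
    refine (isClosed_le (by fun_prop) (by fun_prop)).inter
      ((isClosed_le (by fun_prop) (by fun_prop)).inter
      ((isClosed_eq (by fun_prop) (by fun_prop)).inter
      (isClosed_iInter fun j => isClosed_le (by fun_prop) (by fun_prop))))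
  have hdisj : Disjoint D Q := by
    rw [Set.disjoint_left]
    rintro z hz ⟨z1, z2, z3, z4⟩
    exact absurd (hq z hz z2 z3 z4) (not_lt.2 z1)
  obtain ⟨l, u, v, hl1, huv, hl2⟩ := geometric_hahn_banach_compact_closed hDc hD hQc hQcl hdisj
  obtain ⟨a, b, e, c, hl⟩ := functional_decomp l
  have hu : 0 < u := by simpa using hl1 0 h0
  have hb : v < a * q + b * R + e := by
    have := hl2 (q, R, 1, 0) ⟨le_rfl, le_rfl, rfl, fun j => le_rfl⟩
    rw [hl] at this
    simpa using this
  have ha0 : a ≤ 0 := by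
    refine slope_nonpos (v := v) (A := a * q + b * R + e) fun t ht => ?_
    have := hl2 (q - t, R, 1, 0) ⟨by simpa using ht, le_rfl, rfl, fun j => le_rfl⟩
    rw [hl] at this
    simp at this
    linarith
  have hb0 : b ≤ 0 := by
    refine slope_nonpos (v := v) (A := a * q + b * R + e) fun t ht => ?_
    have := hl2 (q, R - t, 1, 0) ⟨le_rfl, by simpa using ht, rfl, fun j => le_rfl⟩
    rw [hl] at this
    simp at this
    linarith
  have hc0 : ∀ j, c j ≤ 0 := by
    intro j
    refine slope_nonpos (v := v) (A := a * q + b * R + e) fun t ht => ?_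
    have := hl2 (q, R, 1, Pi.single j (-t)) ⟨le_rfl, le_rfl, rfl, fun i => by
      by_cases h : i = j
      · subst h; simpa using ht
      · simp [h]⟩
    rw [hl] at this
    simp [Pi.single_apply] at this
    linarith
  have hT : 0 < R + 1 := by linarith
  set w := u / (R + 1) with hw
  have hwu : w * (R + 1) = u := by rw [hw]; field_simp
  have hw0 : 0 < w := div_pos hu hT
  have hx : ∀ x : Fin n → ℝ, a * eval x f + (b - w) * eval x (theta n r) + (e - w)
      + ∑ j, c j * (eval x (g j)) ^ 2 ≤ 0 := by
    intro x
    have hth := theta_nonneg n r x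
    have h1 := hl1 _ (hphi x)
    rw [hl] at h1
    simp only [phi, Prod.smul_snd, Prod.smul_fst, smul_eq_mul, Pi.smul_apply] at h1
    set s := eval x (theta n r)
    have hs : 0 < 1 + s := by linarith
    have e1 : ∑ j, c j * ((R + 1) * ((eval x (g j)) ^ 2 / (1 + s))) =
        (R + 1) * (∑ j, c j * (eval x (g j)) ^ 2) / (1 + s) := by
      rw [Finset.mul_sum, Finset.sum_div]
      exact Finset.sum_congr rfl fun j _ => by ring
    rw [e1, ← hwu] at h1
    have h2 : (R + 1) * ((a * eval x f + b * s + e + ∑ j, c j * (eval x (g j)) ^ 2) / (1 + s))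
        < (R + 1) * w := by
      calc _ = _ := by ring
        _ < _ := h1
        _ = _ := by ring
    have h3 := lt_of_mul_lt_mul_left h2 hT.le
    rw [div_lt_iff₀ hs] at h3
    linarith
  have hfin : 0 < a * q + (b - w) * R + (e - w) := by nlinarith
  have ha : a < 0 := by
    refine lt_of_le_of_ne ha0 fun h => ?_
    have h1 := hx x0
    simp only [hg0, h] at h1
    rw [h] at hfin
    have h2 : (b - w) * R ≤ (b - w) * eval x0 (theta n r) :=
      mul_le_mul_of_nonpos_left hx0 (by linarith)
    simp at h1
    linarith
  refine ⟨fun j => c j / a, (b - w) / a, -(e - w) / a,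
    fun j => div_nonneg_of_nonpos (hc0 j) ha0, div_nonneg_of_nonpos (by linarith) ha0, ?_, ?_⟩
  · intro x
    have e1 : eval x f + (b - w) / a * eval x (theta n r) + ∑ j, c j / a * (eval x (g j)) ^ 2
        = (a * eval x f + (b - w) * eval x (theta n r) + ∑ j, c j * (eval x (g j)) ^ 2) / a := by
      rw [add_div, add_div, Finset.sum_div, mul_div_cancel_left₀ _ ha.ne]
      congr 1
      · ring
      · exact Finset.sum_congr rfl fun j _ => by ring
    rw [e1]
    apply div_le_div_of_nonpos_of_le ha0
    linarith [hx x]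
  · have e1 : -(e - w) / a - (b - w) / a * R = (-(e - w) - (b - w) * R) / a := by ring
    rw [e1, le_div_iff_of_neg ha]
    linarith

theorem strong_duality_momentProblem (n m : ℕ)
    (g : Fin m → MvPolynomial (Fin n) ℝ) (f : MvPolynomial (Fin n) ℝ)
    (r : ℕ) (M : ℝ) (hM : 0 < M)
    (hne : ∃ x : Fin n → ℝ, ‖x‖ ≤ M ∧ ∀ j, eval x (g j) = 0)
    (hdf : f.totalDegree < 2 * r) (hdg : ∀ j, ((g j) ^ 2).totalDegree < 2 * r) :
    ∃ μstar : Measure (Fin n → ℝ), PFeas n m g f r M μstar ∧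
      (∀ μ : Measure (Fin n → ℝ), PFeas n m g f r M μ →
        (∫ x, eval x f ∂μstar) ≤ ∫ x, eval x f ∂μ) ∧
      (∫ x, eval x f ∂μstar) =
        sSup {v | ∃ (lam : Fin m → ℝ) (δ γ : ℝ), (∀ j, 0 ≤ lam j) ∧ 0 ≤ δ ∧
          (∀ x : Fin n → ℝ,
            γ ≤ eval x f + δ * eval x (theta n r) + ∑ j, lam j * (eval x (g j)) ^ 2) ∧
          v = γ - (n : ℝ) * δ * Real.exp (M ^ 2)} := by
  obtain ⟨x0, hx0M, hg0⟩ := hne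
  have hx0 := theta_le n r M x0 hx0M
  set R : ℝ := (n : ℝ) * Real.exp (M ^ 2) with hRdef
  have hR : 0 ≤ R := by positivity
  have hT : 0 < R + 1 := by linarith
  set K := insert ((0 : ℝ), (1 : ℝ), (0 : ℝ), (0 : Fin m → ℝ)) (Set.range (phi n m g f r)) with hK
  have hKc : IsCompact K := phi_compact n m g f r hdf hdg
  set G : Set (ℝ × ℝ × ℝ × (Fin m → ℝ)) := insert 0 ((fun z => (R + 1) • z) '' K) with hG
  have hGc : IsCompact G := (hKc.image (by fun_prop)).insert 0
  set D := convexHull ℝ G with hDdef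
  have hD : IsCompact D := compact_convexHull_aux hGc
  have hDc : Convex ℝ D := convex_convexHull ℝ G
  have h0 : (0 : ℝ × ℝ × ℝ × (Fin m → ℝ)) ∈ D := subset_convexHull ℝ G (Set.mem_insert _ _)
  have hphi : ∀ x, (R + 1) • phi n m g f r x ∈ D := fun x =>
    subset_convexHull ℝ G (Or.inr ⟨_, Or.inr ⟨x, rfl⟩, rfl⟩)
  have hDS : D ⊆ momentSet n m g f r := by
    refine convexHull_min ?_ (momentSet_convex n m g f r)
    rintro z (rfl | ⟨y, rfl | ⟨x, rfl⟩, rfl⟩)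
    · exact ⟨0, inferInstance, by simp, by simp, by simp, by simp, by simp, by simp, by simp⟩
    · exact ⟨0, inferInstance, by simp, by simp, by simp, by simp, by simp; linarith, by simp,
        by simp⟩
    · exact phi_mem n m g f r _ hT.le x
  -- compact nonempty feasible section
  set P : Set (ℝ × ℝ × ℝ × (Fin m → ℝ)) :=
    D ∩ ({z | z.2.1 ≤ R} ∩ ({z | z.2.2.1 = 1} ∩ ⋂ j, {z | z.2.2.2 j ≤ 0})) with hP
  have hPc : IsCompact P := by
    refine hD.inter_right ?_
    exact ((isClosed_le (by fun_prop) (by fun_prop)).inter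
      ((isClosed_eq (by fun_prop) (by fun_prop)).inter
      (isClosed_iInter fun j => isClosed_le (by fun_prop) (by fun_prop))))
  have hPne : P.Nonempty := by
    have hth := theta_nonneg n r x0
    have hs : 0 < 1 + eval x0 (theta n r) := by linarith
    refine ⟨(1 + eval x0 (theta n r)) • phi n m g f r x0, ?_, ?_, ?_, ?_⟩
    · have := hDc.smul_mem_of_zero_mem h0 (hphi x0)
        (t := (1 + eval x0 (theta n r)) / (R + 1))
        ⟨by positivity, by rw [div_le_one hT]; linarith⟩
      rw [smul_smul, div_mul_cancel₀ _ hT.ne'] at this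
      exact this
    · simp only [phi, Set.mem_setOf_eq, Prod.smul_snd, Prod.smul_fst, smul_eq_mul]
      rw [mul_div_cancel₀ _ hs.ne']
      exact hx0
    · simp only [phi, Set.mem_setOf_eq, Prod.smul_snd, Prod.smul_fst, smul_eq_mul]
      rw [mul_div_cancel₀ _ hs.ne']
    · simp [phi, hg0]
  obtain ⟨z, hzP, hzmin⟩ := hPc.exists_isMinOn hPne (continuous_fst.continuousOn)
  obtain ⟨hzD, hz2, hz3, hz4⟩ := hzP
  simp only [Set.mem_iInter, Set.mem_setOf_eq] at hz2 hz3 hz4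
  obtain ⟨μ, hμ, hf, ht, hg, z1, z2, z3, z4⟩ := hDS hzD
  have hfeas : PFeas n m g f r M μ := by
    refine ⟨⟨?_⟩, hf, ht, hg, fun j => (z4 j) ▸ hz4 j, z2.trans hz2⟩
    rw [hz3] at z3
    have h1 := (ENNReal.toReal_eq_one_iff _).1 z3.symm
    exact h1
  have hsup : (∫ x, eval x f ∂μ) =
        sSup {v | ∃ (lam : Fin m → ℝ) (δ γ : ℝ), (∀ j, 0 ≤ lam j) ∧ 0 ≤ δ ∧
          (∀ x : Fin n → ℝ,
            γ ≤ eval x f + δ * eval x (theta n r) + ∑ j, lam j * (eval x (g j)) ^ 2) ∧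
          v = γ - (n : ℝ) * δ * Real.exp (M ^ 2)} := by
    have step : ∀ q < z.1, ∃ v ∈ {v | ∃ (lam : Fin m → ℝ) (δ γ : ℝ), (∀ j, 0 ≤ lam j) ∧ 0 ≤ δ ∧
          (∀ x : Fin n → ℝ,
            γ ≤ eval x f + δ * eval x (theta n r) + ∑ j, lam j * (eval x (g j)) ^ 2) ∧
          v = γ - (n : ℝ) * δ * Real.exp (M ^ 2)}, q ≤ v := by
      intro q hq
      obtain ⟨lam, δ, γ, h1, h2, h3, h4⟩ := strong_step n m g f r R q hR x0 hx0 hg0 D hD hDc h0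
        hphi (fun y hy y2 y3 y4 => lt_of_lt_of_le hq
          (hzmin ⟨hy, y2, y3, Set.mem_iInter.2 y4⟩))
      refine ⟨_, ⟨lam, δ, γ, h1, h2, h3, rfl⟩, h4.trans (le_of_eq ?_)⟩
      rw [hRdef]; ring
    symm
    refine csSup_eq_of_forall_le_of_forall_lt_exists_gt ?_ ?_ ?_
    · obtain ⟨v, hv, -⟩ := step (z.1 - 1) (by linarith)
      exact ⟨v, hv⟩
    · rintro v ⟨lam, δ, γ, h1, h2, h3, rfl⟩
      exact weak_duality n m g f r M μ hfeas lam δ γ h1 h2 h3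
    · intro q hq
      rw [← z1] at hq
      obtain ⟨v, hv, h⟩ := step ((q + z.1) / 2) (by linarith)
      exact ⟨v, hv, by linarith⟩
  refine ⟨μ, hfeas, fun ν hν => ?_, hsup⟩
  by_contra hlt
  push Not at hlt
  obtain ⟨lam, δ, γ, h1, h2, h3, h4⟩ := strong_step n m g f r R
    (((∫ x, eval x f ∂ν) + z.1) / 2) hR x0 hx0 hg0 D hD hDc h0
    hphi (fun y hy y2 y3 y4 => lt_of_lt_of_le (by rw [← z1] at hlt; linarith)
      (hzmin ⟨hy, y2, y3, Set.mem_iInter.2 y4⟩))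
  have h5 := weak_duality n m g f r M ν hν lam δ γ h1 h2 h3
  have h6 : γ - δ * R = γ - (n : ℝ) * δ * Real.exp (M ^ 2) := by rw [hRdef]; ring
  rw [← z1] at hlt
  linarith
end

section
/- Let f ∈ ℝ[x_1,…,x_n] be nonnegative on all of ℝ^n. Then for every ε > 0 there exists r(ε) ∈ ℕ such that, for every r ≥ r(ε), the polynomial f + ε·θ_r is a sum of squares of real polynomials. -/
open MvPolynomial MeasureTheory Filter Topology

lemma isSOS_iff {n : ℕ} (p : MvPolynomial (Fin n) ℝ) : IsSOS p ↔ IsSumSq p := by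
  constructor
  · rintro ⟨k, q, rfl⟩
    exact IsSumSq.sum_sq _ _
  · intro h
    induction h with
    | zero => exact ⟨0, Fin.elim0, by simp⟩
    | sq_add a hs ih =>
      obtain ⟨k, q, rfl⟩ := ih
      refine ⟨k + 1, Fin.cons a q, ?_⟩
      rw [Fin.sum_univ_succ]
      simp [sq]

lemma sumSq_C_mul {n : ℕ} {p : MvPolynomial (Fin n) ℝ} (hp : IsSumSq p) {c : ℝ} (hc : 0 ≤ c) :
    IsSumSq (C c * p) := by
  refine IsSumSq.mul ?_ hp
  have : (C c : MvPolynomial (Fin n) ℝ) = C (Real.sqrt c) * C (Real.sqrt c) := by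
    rw [← C_mul, Real.mul_self_sqrt hc]
  rw [this]
  exact IsSumSq.mul_self _

lemma theta_term_sumSq {n : ℕ} (k : ℕ) (i : Fin n) :
    IsSumSq (C ((1 : ℝ) / (Nat.factorial k : ℝ)) * X i ^ (2 * k) : MvPolynomial (Fin n) ℝ) := by
  refine sumSq_C_mul ?_ (by positivity)
  rw [two_mul, pow_add]
  exact IsSumSq.mul_self _

lemma theta_diff {n r s : ℕ} (h : r ≤ s) : IsSumSq (theta n s - theta n r) := by
  have : theta n s - theta n r = ∑ k ∈ Finset.Ico (r + 1) (s + 1), ∑ i : Fin n,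
      C ((1 : ℝ) / (Nat.factorial k : ℝ)) * X i ^ (2 * k) := by
    unfold theta
    rw [Finset.sum_Ico_eq_sub _ (by omega)]
  rw [this]
  exact IsSumSq.sum fun k _ => IsSumSq.sum fun i _ => theta_term_sumSq k i

lemma theta_sumSq (n r : ℕ) : IsSumSq (theta n r) :=
  IsSumSq.sum fun k _ => IsSumSq.sum fun i _ => theta_term_sumSq k i

lemma theta_mono_s11 {n r s : ℕ} {p : MvPolynomial (Fin n) ℝ} {t u : ℝ} (hrs : r ≤ s)
    (ht : 0 ≤ t) (htu : t ≤ u) (hp : IsSumSq (p + C t * theta n r)) :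
    IsSumSq (p + C u * theta n s) := by
  have : p + C u * theta n s = (p + C t * theta n r) + (C t * (theta n s - theta n r)
      + C (u - t) * theta n s) := by
    rw [C_sub]; ring
  rw [this]
  exact hp.add ((sumSq_C_mul (theta_diff hrs) ht).add
    (sumSq_C_mul (theta_sumSq n s) (by linarith)))

/-- the cone used for separation -/
noncomputable def sepCone (n : ℕ) : PointedCone ℝ (MvPolynomial (Fin n) ℝ × ℝ) where
  carrier := {x | 0 ≤ x.2 ∧ ∃ r, IsSumSq (x.1 + C x.2 * theta n r)}
  zero_mem' := by
    refine ⟨le_rfl, 0, ?_⟩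
    simp
  add_mem' := by
    rintro ⟨p, t⟩ ⟨q, u⟩ ⟨ht, r, hr⟩ ⟨hu, s, hs⟩
    refine ⟨add_nonneg ht hu, max r s, ?_⟩
    have h1 := theta_mono_s11 (le_max_left r s) ht le_rfl hr
    have h2 := theta_mono_s11 (le_max_right r s) hu le_rfl hs
    change IsSumSq (p + q + C (t + u) * theta n (max r s))
    have e : p + q + C (t + u) * theta n (max r s) =
        (p + C t * theta n (max r s)) + (q + C u * theta n (max r s)) := by
      rw [C_add]
      ring
    rw [e]
    exact h1.add h2
  smul_mem' := by
    rintro ⟨c, hc⟩ ⟨p, t⟩ ⟨ht, r, hr⟩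
    refine ⟨mul_nonneg hc ht, r, ?_⟩
    convert sumSq_C_mul hr hc using 1
    change c • p + C (c * t) * theta n r = C c * (p + C t * theta n r)
    rw [MvPolynomial.smul_eq_C_mul, C_mul]
    ring

lemma mem_sepCone {n : ℕ} (p : MvPolynomial (Fin n) ℝ) (t : ℝ) :
    (p, t) ∈ sepCone n ↔ 0 ≤ t ∧ ∃ r, IsSumSq (p + C t * theta n r) := Iff.rfl

/-- dominated from both sides -/
def Dom {n : ℕ} (p : MvPolynomial (Fin n) ℝ) : Prop :=
  ∃ t, (p, t) ∈ sepCone n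

lemma Dom.add {n : ℕ} {p q : MvPolynomial (Fin n) ℝ} (hp : Dom p) (hq : Dom q) : Dom (p + q) := by
  obtain ⟨t, ht⟩ := hp
  obtain ⟨u, hu⟩ := hq
  exact ⟨t + u, (sepCone n).add_mem ht hu⟩

lemma Dom.C_mul {n : ℕ} {p : MvPolynomial (Fin n) ℝ} (hp : Dom p) {c : ℝ} (hc : 0 ≤ c) :
    Dom (C c * p) := by
  obtain ⟨t, ht⟩ := hp
  refine ⟨c * t, ?_⟩
  have := (sepCone n).smul_mem hc ht
  convert this using 1
  change _ = (c • p, c * t)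
  rw [MvPolynomial.smul_eq_C_mul]

lemma Dom.of_sumSq {n : ℕ} {p : MvPolynomial (Fin n) ℝ} (hp : IsSumSq p) : Dom p :=
  ⟨0, le_rfl, 0, by simpa using hp⟩

lemma dom_neg_X_pow {n : ℕ} (i : Fin n) (k : ℕ) :
    Dom (-(X i ^ k * X i ^ k) : MvPolynomial (Fin n) ℝ) := by
  refine ⟨(k.factorial : ℝ), by positivity, k, ?_⟩
  have h1 : IsSumSq (theta n k - C ((1 : ℝ) / (Nat.factorial k : ℝ)) * X i ^ (2 * k)) := by
    unfold theta
    rw [← Finset.add_sum_erase _ _ (Finset.mem_range.2 (Nat.lt_succ_self k)),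
      ← Finset.add_sum_erase _ _ (Finset.mem_univ i)]
    rw [add_assoc, add_sub_cancel_left]
    exact (IsSumSq.sum fun i _ => theta_term_sumSq k i).add
      (IsSumSq.sum fun k _ => IsSumSq.sum fun i _ => theta_term_sumSq k i)
  have h2 := sumSq_C_mul h1 (c := (k.factorial : ℝ)) (by positivity)
  convert h2 using 1
  rw [mul_sub, ← mul_assoc (C _) (C _), ← MvPolynomial.C_mul, mul_one_div_cancel (by positivity)]
  simp only [map_one]
  ring

lemma dom_monomial {n : ℕ} [NeZero n] (s : Finset (Fin n)) : ∀ α : Fin n → ℕ,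
    Dom (∏ i ∈ s, X i ^ α i : MvPolynomial (Fin n) ℝ) ∧
    Dom (-∏ i ∈ s, X i ^ α i : MvPolynomial (Fin n) ℝ) := by
  induction s using Finset.induction_on with
  | empty =>
    intro α
    refine ⟨Dom.of_sumSq (by simp), ?_⟩
    simpa using dom_neg_X_pow (0 : Fin n) 0
  | insert i s hi ih =>
    intro α
    rw [Finset.prod_insert hi]
    set p : MvPolynomial (Fin n) ℝ := X i ^ α i with hp
    set q : MvPolynomial (Fin n) ℝ := ∏ i ∈ s, X i ^ α i with hq
    have hpp : Dom (-(p * p)) := dom_neg_X_pow i (α i)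
    have hqq : Dom (-(q * q)) := by
      have := (ih (fun i => α i + α i)).2
      simpa [pow_add, Finset.prod_mul_distrib] using this
    have hh : (C (1/2 : ℝ) : MvPolynomial (Fin n) ℝ) * 2 = 1 := by
      rw [show (2 : MvPolynomial (Fin n) ℝ) = C 2 from (map_ofNat C 2).symm, ← MvPolynomial.C_mul]; norm_num
    constructor
    · have := (((Dom.of_sumSq (IsSumSq.mul_self (p + q))).add hpp).add hqq).C_mul
        (c := 1/2) (by norm_num)
      convert this using 1
      linear_combination (-(p * q)) * hh
    · have := (((Dom.of_sumSq (IsSumSq.mul_self (p - q))).add hpp).add hqq).C_mul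
        (c := 1/2) (by norm_num)
      convert this using 1
      linear_combination ((p * q)) * hh

lemma dom_all {n : ℕ} [NeZero n] (p : MvPolynomial (Fin n) ℝ) : Dom p := by
  induction p using MvPolynomial.induction_on' with
  | add p q hp hq => exact hp.add hq
  | monomial u a =>
    rw [MvPolynomial.monomial_eq, Finsupp.prod_fintype _ _ (by simp)]
    have h := dom_monomial (n := n) Finset.univ u
    rcases le_total 0 a with ha | ha
    · exact h.1.C_mul ha
    · have := h.2.C_mul (c := -a) (by linarith)
      convert this using 1
      simp

lemma exists_functional {n : ℕ} [NeZero n] (f : MvPolynomial (Fin n) ℝ) {ε : ℝ} (hε : 0 < ε)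
    (h : ∀ r, ¬ IsSumSq (f + C ε * theta n r)) :
    ∃ L : MvPolynomial (Fin n) ℝ →ₗ[ℝ] ℝ, (∀ p, 0 ≤ L (p * p)) ∧ (∀ r, L (theta n r) ≤ 1) ∧
      L f < 0 := by
  have hf0 : f ≠ 0 := by
    rintro rfl
    apply h 0
    rw [zero_add]
    exact sumSq_C_mul (theta_sumSq n 0) hε.le
  have h01 : ((0, 1) : MvPolynomial (Fin n) ℝ × ℝ) ≠ 0 := by simp
  let g₀ : (MvPolynomial (Fin n) ℝ × ℝ) →ₗ.[ℝ] ℝ :=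
    LinearPMap.mkSpanSingleton ((0, 1) : MvPolynomial (Fin n) ℝ × ℝ) (1 : ℝ) h01
  have hdom : g₀.domain = Submodule.span ℝ {((0, 1) : MvPolynomial (Fin n) ℝ × ℝ)} := rfl
  have hx : ((f, 0) : MvPolynomial (Fin n) ℝ × ℝ) ∉ g₀.domain := by
    rw [hdom, Submodule.mem_span_singleton]
    rintro ⟨a, ha⟩
    apply hf0
    simpa using (congrArg Prod.fst ha).symm
  let g₁ := g₀.supSpanSingleton ((f, 0) : MvPolynomial (Fin n) ℝ × ℝ) (-ε) hx
  have hmem : ∀ t : ℝ, ((0, t) : MvPolynomial (Fin n) ℝ × ℝ) ∈ g₀.domain := fun t => by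
    rw [hdom, Submodule.mem_span_singleton]
    exact ⟨t, by simp⟩
  have hval0 : ∀ t : ℝ, g₀ ⟨(0, t), hmem t⟩ = t := fun t => by
    have := LinearPMap.mkSpanSingleton'_apply (σ := RingHom.id ℝ) ((0, 1) : MvPolynomial (Fin n) ℝ × ℝ) (1 : ℝ)
      (fun c hc => by have := congrArg Prod.snd hc; simpa using this) t
      (Submodule.mem_span_singleton.2 ⟨t, rfl⟩)
    simp only [Prod.smul_mk, smul_zero, smul_eq_mul, mul_one, RingHom.id_apply] at this
    exact this
  have hmem1 : ∀ a t : ℝ, ((a • f, t) : MvPolynomial (Fin n) ℝ × ℝ) ∈ g₁.domain := fun a t => by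
    have : ((a • f, t) : MvPolynomial (Fin n) ℝ × ℝ) = (0, t) + a • (f, 0) := by simp
    rw [this]
    exact Submodule.add_mem _ (Submodule.mem_sup_left (hmem t)) (Submodule.mem_sup_right
      (Submodule.mem_span_singleton.2 ⟨a, rfl⟩))
  have hval1 : ∀ a t : ℝ, g₁ ⟨(a • f, t), hmem1 a t⟩ = t - a * ε := fun a t => by
    have := g₀.supSpanSingleton_apply_mk ((f, 0) : MvPolynomial (Fin n) ℝ × ℝ) (-ε) hx (0, t) (hmem t) a
    rw [hval0] at this
    simp only [Prod.smul_mk, smul_zero, Prod.mk_add_mk, zero_add, add_zero] at this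
    rw [sub_eq_add_neg, ← mul_neg]
    exact this
  obtain ⟨g, hg1, hg2⟩ := riesz_extension (sepCone n) g₁ (by
    rintro ⟨x, hx1⟩ hxs
    obtain ⟨y, hy, z, hz, rfl⟩ := Submodule.mem_sup.1 hx1
    rw [hdom] at hy
    obtain ⟨t, rfl⟩ := Submodule.mem_span_singleton.1 hy
    obtain ⟨a, rfl⟩ := Submodule.mem_span_singleton.1 hz
    have he : t • ((0, 1) : MvPolynomial (Fin n) ℝ × ℝ) + a • (f, 0) = (a • f, t) := by simp
    have hv : g₁ ⟨_, hx1⟩ = t - a * ε := by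
      rw [← hval1 a t]; congr 1; exact Subtype.ext he
    rw [hv]
    change t • ((0, 1) : MvPolynomial (Fin n) ℝ × ℝ) + a • (f, 0) ∈ _ at hxs
    rw [he, mem_sepCone] at hxs
    obtain ⟨ht, r, hr⟩ := hxs
    by_contra hneg
    push Not at hneg
    have ha : 0 < a := by
      by_contra hna
      have : a * ε ≤ 0 := mul_nonpos_of_nonpos_of_nonneg (not_lt.1 hna) hε.le
      linarith
    have h1 := sumSq_C_mul hr (c := a⁻¹) (by positivity)
    have h2 : C a⁻¹ * (a • f + C t * theta n r) = f + C (a⁻¹ * t) * theta n r := by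
      rw [MvPolynomial.smul_eq_C_mul, mul_add, ← mul_assoc, ← mul_assoc, ← MvPolynomial.C_mul,
        ← MvPolynomial.C_mul, inv_mul_cancel₀ ha.ne']
      simp
    rw [h2] at h1
    refine h r (theta_mono_s11 le_rfl (by positivity) ?_ h1)
    rw [inv_mul_le_iff₀ ha]
    linarith) (by
    rintro ⟨p, t⟩
    obtain ⟨u, hu⟩ := dom_all p
    refine ⟨⟨(0, u - t), by simpa using hmem1 0 (u - t)⟩, ?_⟩
    simpa using hu)
  have hg01 : ∀ t, g (0, t) = t := fun t => by
    have := hg1 ⟨_, hmem1 0 t⟩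
    rw [hval1] at this
    simpa using this
  refine ⟨g.comp (LinearMap.inl ℝ _ _), ?_, ?_, ?_⟩
  · intro p
    exact hg2 _ ⟨le_rfl, 0, by simp⟩
  · intro r
    have := hg2 (-theta n r, 1) ⟨zero_le_one, r, by simp⟩
    have h2 : ((-theta n r, 1) : MvPolynomial (Fin n) ℝ × ℝ) = (0, 1) - (theta n r, 0) := by simp
    rw [h2, map_sub, hg01] at this
    simpa using this
  · have := hg1 ⟨_, hmem1 1 0⟩
    rw [hval1] at this
    simp at this
    simp [this, hε]

/-- Cauchy-Schwarz -/
lemma cs {n : ℕ} (L : MvPolynomial (Fin n) ℝ →ₗ[ℝ] ℝ) (hL : ∀ p, 0 ≤ L (p * p))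
    (p q : MvPolynomial (Fin n) ℝ) : L (p * q) ^ 2 ≤ L (p * p) * L (q * q) := by
  have h : ∀ t : ℝ, 0 ≤ L (q * q) * (t * t) + (2 * L (p * q)) * t + L (p * p) := fun t => by
    have := hL (p + t • q)
    have e : (p + t • q) * (p + t • q) = p * p + (2 * t) • (p * q) + (t * t) • (q * q) := by
      simp only [MvPolynomial.smul_eq_C_mul, C_mul, map_ofNat]
      ring
    rw [e] at this
    simp only [map_add, map_smul, smul_eq_mul] at this
    linarith
  have := discrim_le_zero h
  unfold discrim at this
  nlinarith

lemma moment_le {n : ℕ} (L : MvPolynomial (Fin n) ℝ →ₗ[ℝ] ℝ) (hL : ∀ p, 0 ≤ L (p * p))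
    (hθ : ∀ r, L (theta n r) ≤ 1) (i : Fin n) (k : ℕ) :
    L (X i ^ k * X i ^ k) ≤ k.factorial := by
  have hsq : ∀ k i, 0 ≤ L (C ((1 : ℝ) / (Nat.factorial k : ℝ)) * X i ^ (2 * k)) := fun k i => by
    rw [← MvPolynomial.smul_eq_C_mul, map_smul, two_mul, pow_add, smul_eq_mul]
    exact mul_nonneg (by positivity) (hL _)
  have h1 : L (C ((1 : ℝ) / (Nat.factorial k : ℝ)) * X i ^ (2 * k)) ≤ L (theta n k) := by
    unfold theta
    rw [map_sum]
    refine le_trans ?_ (Finset.single_le_sum (f := fun k => L (∑ i : Fin n,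
      C ((1 : ℝ) / (Nat.factorial k : ℝ)) * X i ^ (2 * k))) (fun k _ => ?_)
      (Finset.mem_range.2 (Nat.lt_succ_self k)))
    · rw [map_sum]
      exact Finset.single_le_sum (f := fun i => L (C ((1 : ℝ) / (Nat.factorial k : ℝ)) * X i ^ (2 * k)))
        (fun i _ => hsq k i) (Finset.mem_univ i)
    · rw [map_sum]
      exact Finset.sum_nonneg fun i _ => hsq k i
  have h2 := h1.trans (hθ k)
  rw [← MvPolynomial.smul_eq_C_mul, map_smul, smul_eq_mul, one_div, inv_mul_le_iff₀ (by positivity),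
    two_mul, pow_add] at h2
  simpa using h2

lemma fact_aux (m a : ℕ) : ((2 : ℝ) ^ m) ^ (a + a) * ((a + a).factorial : ℝ) ≤
    (((2 : ℝ) ^ (m + 1)) ^ a * a.factorial) ^ 2 := by
  have h1 : (a + a).factorial ≤ 4 ^ a * (a.factorial * a.factorial) := by
    rw [← Nat.add_choose_mul_factorial_mul_factorial, mul_assoc]
    refine Nat.mul_le_mul_right _ ?_
    refine (Nat.choose_le_two_pow _ _).trans (le_of_eq ?_)
    rw [← two_mul, pow_mul]; norm_num
  have h2 : ((a + a).factorial : ℝ) ≤ 4 ^ a * (a.factorial * a.factorial) := by exact_mod_cast h1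
  refine (mul_le_mul_of_nonneg_left h2 (by positivity)).trans (le_of_eq ?_)
  rw [show (4 : ℝ) = 2 * 2 by norm_num, mul_pow]
  ring

lemma le_of_sq_le_aux {a b : ℝ} (hb : 0 ≤ b) (h : a ^ 2 ≤ b ^ 2) : a ≤ b :=
  abs_le_of_sq_le_sq' h hb |>.2

lemma moment_prod {n : ℕ} [NeZero n] (L : MvPolynomial (Fin n) ℝ →ₗ[ℝ] ℝ) (hL : ∀ p, 0 ≤ L (p * p))
    (hθ : ∀ r, L (theta n r) ≤ 1) (s : Finset (Fin n)) : ∀ α : Fin n → ℕ,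
    L (∏ i ∈ s, X i ^ α i) ^ 2 ≤ ∏ i ∈ s, (((2 : ℝ) ^ s.card) ^ α i * (α i).factorial) := by
  induction s using Finset.induction_on with
  | empty =>
    intro α
    have h1 := moment_le L hL hθ 0 0
    have h2 := hL 1
    simp at h1 h2 ⊢
    rw [abs_of_nonneg h2]; exact h1
  | insert i s hi ih =>
    intro α
    rw [Finset.prod_insert hi, Finset.prod_insert hi]
    refine (cs L hL _ _).trans ?_
    have h1 := moment_le L hL hθ i (α i)
    have h2 : L ((∏ i ∈ s, X i ^ α i) * (∏ i ∈ s, X i ^ α i)) ≤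
        ∏ i ∈ s, (((2 : ℝ) ^ (s.card + 1)) ^ α i * (α i).factorial) := by
      refine le_of_sq_le_aux (by positivity) ?_
      rw [← Finset.prod_mul_distrib]
      simp only [← pow_add]
      refine (ih (fun i => α i + α i)).trans ?_
      rw [← Finset.prod_pow]
      refine Finset.prod_le_prod (fun i _ => by positivity) fun i _ => ?_
      exact fact_aux _ _
    rw [Finset.card_insert_of_notMem hi]
    refine mul_le_mul (h1.trans ?_) h2 (hL _) (by positivity)
    refine le_mul_of_one_le_left (by positivity) (one_le_pow₀ (one_le_pow₀ (by norm_num)))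

/-- moments -/
noncomputable def lmom {n : ℕ} (L : MvPolynomial (Fin n) ℝ →ₗ[ℝ] ℝ) (α : Fin n →₀ ℕ) : ℝ :=
  L (monomial α 1)

/-- weights `R^|α| / α!` -/
noncomputable def wt {n : ℕ} (R : ℝ) (α : Fin n →₀ ℕ) : ℝ :=
  ∏ i, (R ^ α i / (α i).factorial)

lemma wt_nonneg {n : ℕ} {R : ℝ} (hR : 0 ≤ R) (α : Fin n →₀ ℕ) : 0 ≤ wt R α :=
  Finset.prod_nonneg fun _ _ => by positivity

lemma wt_mono {n : ℕ} {R S : ℝ} (hR : 0 ≤ R) (hRS : R ≤ S) (α : Fin n →₀ ℕ) : wt R α ≤ wt S α :=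
  Finset.prod_le_prod (fun _ _ => by positivity) fun _ _ => by gcongr

lemma lmom_le {n : ℕ} [NeZero n] (L : MvPolynomial (Fin n) ℝ →ₗ[ℝ] ℝ) (hL : ∀ p, 0 ≤ L (p * p))
    (hθ : ∀ r, L (theta n r) ≤ 1) (α : Fin n →₀ ℕ) :
    |lmom L α| ≤ ∏ i, (((2 : ℝ) ^ n) ^ α i * Real.sqrt (α i).factorial) := by
  refine abs_le_of_sq_le_sq ?_ (by positivity)
  have := moment_prod L hL hθ Finset.univ α
  unfold lmom
  rw [MvPolynomial.monomial_eq, Finsupp.prod_fintype _ _ (by simp), map_one, one_mul]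
  refine this.trans ?_
  rw [← Finset.prod_pow]
  refine Finset.prod_le_prod (fun _ _ => by positivity) fun i _ => ?_
  rw [mul_pow, Real.sq_sqrt (by positivity), Finset.card_univ, Fintype.card_fin]
  refine mul_le_mul_of_nonneg_right ?_ (by positivity)
  exact le_self_pow₀ (one_le_pow₀ (one_le_pow₀ (by norm_num))) (by norm_num)

lemma summable_aux (R : ℝ) (hR : 0 ≤ R) :
    Summable (fun a : ℕ => R ^ a / (a.factorial : ℝ) * Real.sqrt a.factorial) := by
  have h1 : Summable (fun a : ℕ => (1 / 4 : ℝ) ^ a) :=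
    summable_geometric_of_lt_one (by norm_num) (by norm_num)
  have h2 := Real.summable_pow_div_factorial (4 * R ^ 2)
  refine Summable.of_nonneg_of_le (fun a => by positivity) (fun a => ?_) (h1.add h2)
  have hs : (0 : ℝ) < Real.sqrt a.factorial := Real.sqrt_pos.2 (by positivity)
  have e : (a.factorial : ℝ) = Real.sqrt a.factorial * Real.sqrt a.factorial :=
    (Real.mul_self_sqrt (by positivity)).symm
  set s := Real.sqrt a.factorial with hsdef
  rw [e]
  have e1 : R ^ a / (s * s) * s = (1 / 2) ^ a * ((2 * R) ^ a / s) := by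
    rw [mul_pow, one_div, inv_pow]; field_simp
  have e2 : (4 * R ^ 2) ^ a / (s * s) = ((2 * R) ^ a / s) ^ 2 := by
    rw [div_pow, ← pow_mul, mul_comm a 2, pow_mul, sq s]; congr 2; ring
  have e3 : (1 / 4 : ℝ) ^ a = ((1 / 2) ^ a) ^ 2 := by
    rw [← pow_mul, mul_comm a 2, pow_mul]; norm_num
  rw [e1, e2, e3]
  nlinarith [sq_nonneg ((1 / 2 : ℝ) ^ a - (2 * R) ^ a / s), sq_nonneg ((1 / 2 : ℝ) ^ a + (2 * R) ^ a / s)]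

lemma summable_prod_aux {n : ℕ} (f : ℕ → ℝ) (hf : ∀ a, 0 ≤ f a) (hs : Summable f) :
    Summable (fun α : Fin n →₀ ℕ => ∏ i, f (α i)) := by
  refine summable_of_sum_le (c := (∑' a, f a) ^ n) (fun α => Finset.prod_nonneg fun _ _ => hf _) ?_
  intro u
  obtain ⟨N, hN⟩ : ∃ N : ℕ, ∀ α ∈ u, ∀ i, α i < N := by
    refine ⟨(u.sup fun α => ∑ i, α i) + 1, fun α hα i => ?_⟩
    have h1 : ∑ i, α i ≤ u.sup fun α => ∑ i, α i := Finset.le_sup (f := fun α : Fin n →₀ ℕ => ∑ i, α i) hα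
    have h2 : α i ≤ ∑ i, α i := Finset.single_le_sum (f := fun i => α i) (fun _ _ => Nat.zero_le _) (Finset.mem_univ i)
    omega
  have h1 : ∑ α ∈ u, ∏ i, f (α i) = ∑ x ∈ u.image (fun α : Fin n →₀ ℕ => (α : Fin n → ℕ)), ∏ i, f (x i) := by
    rw [Finset.sum_image]
    intro a _ b _ h
    exact DFunLike.coe_injective h
  rw [h1]
  have h2 : ∑ x ∈ Fintype.piFinset (fun _ : Fin n => Finset.range N), ∏ i, f (x i) =
      (∑ a ∈ Finset.range N, f a) ^ n := by
    rw [← Finset.prod_univ_sum]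
    simp
  refine (Finset.sum_le_sum_of_subset_of_nonneg (t := Fintype.piFinset (fun _ : Fin n => Finset.range N))
    ?_ (fun x _ _ => Finset.prod_nonneg fun _ _ => hf _)).trans ?_
  · intro x hx
    obtain ⟨α, hα, rfl⟩ := Finset.mem_image.1 hx
    rw [Fintype.mem_piFinset]
    exact fun i => Finset.mem_range.2 (hN α hα i)
  · rw [h2]
    exact pow_le_pow_left₀ (Finset.sum_nonneg fun _ _ => hf _) (hs.sum_le_tsum _ (fun _ _ => hf _)) n

/-- The moment functional is summable against exponential-type weights. -/
def MomSum {n : ℕ} (L : MvPolynomial (Fin n) ℝ →ₗ[ℝ] ℝ) : Prop :=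
  ∀ R : ℝ, 0 ≤ R → Summable (fun α : Fin n →₀ ℕ => wt R α * |lmom L α|)

lemma momSum {n : ℕ} [NeZero n] (L : MvPolynomial (Fin n) ℝ →ₗ[ℝ] ℝ) (hL : ∀ p, 0 ≤ L (p * p))
    (hθ : ∀ r, L (theta n r) ≤ 1) : MomSum L := by
  intro R hR
  refine Summable.of_nonneg_of_le (fun α => mul_nonneg (wt_nonneg hR α) (abs_nonneg _)) (fun α => ?_)
    (summable_prod_aux (n := n) _ (fun a => by positivity) (summable_aux (R * 2 ^ n) (by positivity)))
  refine (mul_le_mul_of_nonneg_left (lmom_le L hL hθ α) (wt_nonneg hR α)).trans (le_of_eq ?_)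
  unfold wt
  rw [← Finset.prod_mul_distrib]
  refine Finset.prod_congr rfl fun i _ => ?_
  rw [mul_pow]
  ring

lemma exp_conv (R S : ℝ) (a : ℕ) :
    ∑ p ∈ Finset.HasAntidiagonal.antidiagonal a, (R ^ p.1 / (p.1.factorial : ℝ)) * (S ^ p.2 / (p.2.factorial : ℝ)) =
      (R + S) ^ a / (a.factorial : ℝ) := by
  rw [(Commute.all R S).add_pow', Finset.sum_div]
  refine Finset.sum_congr rfl fun p hp => ?_
  obtain ⟨j, k⟩ := p
  have hjk : j + k = a := Finset.HasAntidiagonal.mem_antidiagonal.1 hp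
  subst hjk
  have : ((j + k).choose j : ℝ) * j.factorial * k.factorial = (j + k).factorial := by
    have := Nat.choose_mul_factorial_mul_factorial (Nat.le_add_right j k)
    rw [Nat.add_sub_cancel_left] at this
    exact_mod_cast this
  rw [nsmul_eq_mul, ← this]
  have hc : ((j + k).choose j : ℝ) ≠ 0 := by
    exact_mod_cast (Nat.choose_pos (Nat.le_add_right j k)).ne'
  field_simp

lemma wt_conv {n : ℕ} {R S : ℝ} (hR : 0 ≤ R) (hS : 0 ≤ S) (α : Fin n →₀ ℕ) :
    ∑ p ∈ Finset.HasAntidiagonal.antidiagonal α, wt R p.1 * wt S p.2 ≤ wt (R + S) α := by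
  have h1 : wt (R + S) α = ∑ x ∈ Fintype.piFinset (fun i : Fin n => Finset.HasAntidiagonal.antidiagonal (α i)),
      ∏ i, ((R ^ (x i).1 / ((x i).1.factorial : ℝ)) * (S ^ (x i).2 / ((x i).2.factorial : ℝ))) := by
    unfold wt
    simp_rw [← exp_conv]
    rw [Finset.prod_univ_sum]
  rw [h1]
  have h2 : ∑ p ∈ Finset.HasAntidiagonal.antidiagonal α, wt R p.1 * wt S p.2 =
      ∑ x ∈ (Finset.HasAntidiagonal.antidiagonal α).image (fun p => fun i => (p.1 i, p.2 i)),
      ∏ i, ((R ^ (x i).1 / ((x i).1.factorial : ℝ)) * (S ^ (x i).2 / ((x i).2.factorial : ℝ))) := by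
    rw [Finset.sum_image]
    · simp [wt, Finset.prod_mul_distrib]
    · rintro ⟨a, b⟩ _ ⟨c, d⟩ _ h
      have h' : ∀ i, a i = c i ∧ b i = d i := fun i => by
        have := congrFun h i
        simpa using this
      ext i
      · exact (h' i).1
      · exact (h' i).2
  rw [h2]
  refine Finset.sum_le_sum_of_subset_of_nonneg ?_
    (fun x _ _ => Finset.prod_nonneg fun _ _ => by positivity)
  intro x hx
  obtain ⟨p, hp, rfl⟩ := Finset.mem_image.1 hx
  rw [Fintype.mem_piFinset]
  intro i
  rw [Finset.HasAntidiagonal.mem_antidiagonal] at hp ⊢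
  rw [← hp]; rfl

/-- growth bound -/
def Bd {n : ℕ} (K R : ℝ) (F : MvPowerSeries (Fin n) ℝ) : Prop :=
  ∀ α, |MvPowerSeries.coeff α F| ≤ K * wt R α

lemma Bd.mul {n : ℕ} {K R K' R' : ℝ} (hK : 0 ≤ K) (hR : 0 ≤ R) (hK' : 0 ≤ K') (hR' : 0 ≤ R')
    {F G : MvPowerSeries (Fin n) ℝ} (hF : Bd K R F) (hG : Bd K' R' G) :
    Bd (K * K') (R + R') (F * G) := by
  intro α
  classical
  rw [MvPowerSeries.coeff_mul]
  refine (Finset.abs_sum_le_sum_abs _ _).trans ?_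
  refine le_trans ?_ (mul_le_mul_of_nonneg_left (wt_conv hR hR' α) (mul_nonneg hK hK'))
  rw [Finset.mul_sum]
  refine Finset.sum_le_sum fun p _ => ?_
  rw [abs_mul]
  refine (mul_le_mul (hF _) (hG _) (abs_nonneg _) (mul_nonneg hK (wt_nonneg hR _))).trans (le_of_eq ?_)
  ring

lemma Bd.add {n : ℕ} {K R K' R' : ℝ} (hK : 0 ≤ K) (hR : 0 ≤ R) (hK' : 0 ≤ K') (hR' : 0 ≤ R')
    {F G : MvPowerSeries (Fin n) ℝ} (hF : Bd K R F) (hG : Bd K' R' G) :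
    Bd (K + K') (R + R') (F + G) := by
  intro α
  rw [map_add]
  refine (abs_add_le _ _).trans ?_
  rw [add_mul]
  refine add_le_add ((hF α).trans ?_) ((hG α).trans ?_)
  · exact mul_le_mul_of_nonneg_left (wt_mono hR (by linarith) α) hK
  · exact mul_le_mul_of_nonneg_left (wt_mono hR' (by linarith) α) hK'

/-- uniformly bounded, coefficientwise convergent sequence of series -/
def GoodSeq {n : ℕ} (F : ℕ → MvPowerSeries (Fin n) ℝ) (F₀ : MvPowerSeries (Fin n) ℝ) : Prop :=
  (∃ K R : ℝ, 0 ≤ K ∧ 0 ≤ R ∧ ∀ j, Bd K R (F j)) ∧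
  ∀ α, Tendsto (fun j => MvPowerSeries.coeff α (F j)) atTop (𝓝 (MvPowerSeries.coeff α F₀))

lemma GoodSeq.mul {n : ℕ} {F G : ℕ → MvPowerSeries (Fin n) ℝ} {F₀ G₀ : MvPowerSeries (Fin n) ℝ}
    (hF : GoodSeq F F₀) (hG : GoodSeq G G₀) : GoodSeq (fun j => F j * G j) (F₀ * G₀) := by
  obtain ⟨⟨K, R, hK, hR, hb⟩, ht⟩ := hF
  obtain ⟨⟨K', R', hK', hR', hb'⟩, ht'⟩ := hG
  refine ⟨⟨K * K', R + R', by positivity, by positivity, fun j => (hb j).mul hK hR hK' hR' (hb' j)⟩, ?_⟩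
  intro α
  classical
  simp only [MvPowerSeries.coeff_mul]
  exact tendsto_finsetSum _ fun p _ => (ht _).mul (ht' _)

lemma GoodSeq.add {n : ℕ} {F G : ℕ → MvPowerSeries (Fin n) ℝ} {F₀ G₀ : MvPowerSeries (Fin n) ℝ}
    (hF : GoodSeq F F₀) (hG : GoodSeq G G₀) : GoodSeq (fun j => F j + G j) (F₀ + G₀) := by
  obtain ⟨⟨K, R, hK, hR, hb⟩, ht⟩ := hF
  obtain ⟨⟨K', R', hK', hR', hb'⟩, ht'⟩ := hG
  refine ⟨⟨K + K', R + R', by positivity, by positivity, fun j => (hb j).add hK hR hK' hR' (hb' j)⟩, ?_⟩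
  intro α
  simp only [map_add]
  exact (ht _).add (ht' _)

lemma bd_C {n : ℕ} (c : ℝ) : Bd |c| 0 (MvPowerSeries.C c : MvPowerSeries (Fin n) ℝ) := by
  intro α
  classical
  rw [MvPowerSeries.coeff_C]
  split_ifs with h
  · subst h; simp [wt]
  · simpa using mul_nonneg (abs_nonneg c) (wt_nonneg le_rfl α)

lemma GoodSeq.const {n : ℕ} {F : MvPowerSeries (Fin n) ℝ}
    (hF : ∃ K R : ℝ, 0 ≤ K ∧ 0 ≤ R ∧ Bd K R F) : GoodSeq (fun _ => F) F := by
  obtain ⟨K, R, hK, hR, hb⟩ := hF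
  exact ⟨⟨K, R, hK, hR, fun _ => hb⟩, fun α => tendsto_const_nhds⟩

/-- algebra of exponential type series -/
noncomputable def goodAlg (n : ℕ) : Subalgebra ℝ (MvPowerSeries (Fin n) ℝ) where
  carrier := {F | ∃ K R : ℝ, 0 ≤ K ∧ 0 ≤ R ∧ Bd K R F}
  mul_mem' := by
    rintro F G ⟨K, R, hK, hR, hb⟩ ⟨K', R', hK', hR', hb'⟩
    exact ⟨K * K', R + R', by positivity, by positivity, hb.mul hK hR hK' hR' hb'⟩
  add_mem' := by
    rintro F G ⟨K, R, hK, hR, hb⟩ ⟨K', R', hK', hR', hb'⟩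
    exact ⟨K + K', R + R', by positivity, by positivity, hb.add hK hR hK' hR' hb'⟩
  algebraMap_mem' := fun c => ⟨|c|, 0, abs_nonneg _, le_rfl, bd_C c⟩

/-- extension of the functional -/
noncomputable def extS {n : ℕ} (L : MvPolynomial (Fin n) ℝ →ₗ[ℝ] ℝ) (F : MvPowerSeries (Fin n) ℝ) : ℝ :=
  ∑' α, MvPowerSeries.coeff α F * lmom L α

lemma ext_summable {n : ℕ} {L : MvPolynomial (Fin n) ℝ →ₗ[ℝ] ℝ} (hL : MomSum L)
    {F : MvPowerSeries (Fin n) ℝ} (hF : F ∈ goodAlg n) :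
    Summable (fun α => MvPowerSeries.coeff α F * lmom L α) := by
  obtain ⟨K, R, hK, hR, hb⟩ := hF
  refine Summable.of_norm_bounded ((hL R hR).mul_left K) fun α => ?_
  rw [Real.norm_eq_abs, abs_mul, ← mul_assoc]
  exact mul_le_mul_of_nonneg_right (hb α) (abs_nonneg _)

/-- the extension as a linear map -/
noncomputable def extLin {n : ℕ} {L : MvPolynomial (Fin n) ℝ →ₗ[ℝ] ℝ} (hL : MomSum L) :
    goodAlg n →ₗ[ℝ] ℝ where
  toFun F := extS L F
  map_add' F G := by
    unfold extS
    rw [← (ext_summable hL F.2).tsum_add (ext_summable hL G.2)]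
    simp [add_mul]
  map_smul' c F := by
    unfold extS
    rw [RingHom.id_apply, smul_eq_mul, ← tsum_mul_left]
    simp [mul_assoc]

lemma ext_tendsto {n : ℕ} {L : MvPolynomial (Fin n) ℝ →ₗ[ℝ] ℝ} (hL : MomSum L)
    {F : ℕ → MvPowerSeries (Fin n) ℝ} {F₀ : MvPowerSeries (Fin n) ℝ} (h : GoodSeq F F₀) :
    Tendsto (fun j => extS L (F j)) atTop (𝓝 (extS L F₀)) := by
  obtain ⟨⟨K, R, hK, hR, hb⟩, ht⟩ := h
  refine tendsto_tsum_of_dominated_convergence ((hL R hR).mul_left K) (fun α => (ht α).mul_const _) ?_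
  refine Eventually.of_forall fun j α => ?_
  rw [Real.norm_eq_abs, abs_mul, ← mul_assoc]
  exact mul_le_mul_of_nonneg_right (hb j α) (abs_nonneg _)

lemma ext_coe {n : ℕ} (L : MvPolynomial (Fin n) ℝ →ₗ[ℝ] ℝ) (p : MvPolynomial (Fin n) ℝ) :
    extS L (p : MvPowerSeries (Fin n) ℝ) = L p := by
  unfold extS
  simp only [MvPolynomial.coeff_coe]
  rw [tsum_eq_sum (s := p.support) (fun α hα => by
    rw [MvPolynomial.notMem_support_iff.1 hα, zero_mul])]
  conv_rhs => rw [p.as_sum, map_sum]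
  refine Finset.sum_congr rfl fun α _ => ?_
  rw [lmom, ← smul_eq_mul, ← map_smul, MvPolynomial.smul_monomial, smul_eq_mul, mul_one]

lemma ext_sq_nonneg {n : ℕ} {L : MvPolynomial (Fin n) ℝ →ₗ[ℝ] ℝ} (hL : MomSum L)
    (hpos : ∀ p, 0 ≤ L (p * p)) {F : MvPowerSeries (Fin n) ℝ} (hF : F ∈ goodAlg n) :
    0 ≤ extS L (F * F) := by
  obtain ⟨K, R, hK, hR, hb⟩ := hF
  let T : ℕ → MvPolynomial (Fin n) ℝ := fun j =>
    MvPowerSeries.trunc' ℝ (Finsupp.equivFunOnFinite.symm fun _ => j) F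
  have hT : GoodSeq (fun j => (T j : MvPowerSeries (Fin n) ℝ)) F := by
    refine ⟨⟨K, R, hK, hR, fun j α => ?_⟩, fun α => ?_⟩
    · rw [MvPolynomial.coeff_coe, MvPowerSeries.coeff_trunc']
      split_ifs
      · exact hb α
      · simpa using mul_nonneg hK (wt_nonneg hR α)
    · refine tendsto_const_nhds.congr' ?_
      filter_upwards [eventually_ge_atTop (∑ i, α i)] with j hj
      rw [MvPolynomial.coeff_coe, MvPowerSeries.coeff_trunc', if_pos]
      intro i
      refine le_trans ?_ hj
      exact Finset.single_le_sum (f := fun i => α i) (fun _ _ => Nat.zero_le _) (Finset.mem_univ i)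
  refine ge_of_tendsto (ext_tendsto hL (hT.mul hT)) (Eventually.of_forall fun j => ?_)
  rw [← MvPolynomial.coe_mul, ext_coe]
  exact hpos _

lemma abs_prod_sub_prod_le_aux {ι : Type*} (s : Finset ι) (u v : ι → ℝ)
    (hu : ∀ i ∈ s, 0 ≤ u i ∧ u i ≤ 1) (hv : ∀ i ∈ s, 0 ≤ v i ∧ v i ≤ 1) :
    |∏ i ∈ s, u i - ∏ i ∈ s, v i| ≤ ∑ i ∈ s, |u i - v i| := by
  classical
  induction s using Finset.induction_on with
  | empty => simp
  | insert i s hi ih =>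
    rw [Finset.prod_insert hi, Finset.prod_insert hi, Finset.sum_insert hi]
    have hu' : ∀ j ∈ s, 0 ≤ u j ∧ u j ≤ 1 := fun j hj => hu j (Finset.mem_insert_of_mem hj)
    have hv' : ∀ j ∈ s, 0 ≤ v j ∧ v j ≤ 1 := fun j hj => hv j (Finset.mem_insert_of_mem hj)
    have ih' := ih hu' hv'
    have h0 := hv i (Finset.mem_insert_self _ _)
    have hA0 : 0 ≤ ∏ i ∈ s, u i := Finset.prod_nonneg fun j hj => (hu' j hj).1
    have hA1 : ∏ i ∈ s, u i ≤ 1 := Finset.prod_le_one (fun j hj => (hu' j hj).1) fun j hj => (hu' j hj).2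
    have e : u i * ∏ i ∈ s, u i - v i * ∏ i ∈ s, v i =
      (u i - v i) * ∏ i ∈ s, u i + v i * (∏ i ∈ s, u i - ∏ i ∈ s, v i) := by ring
    rw [e]
    refine (abs_add_le _ _).trans (add_le_add ?_ ?_)
    · rw [abs_mul, abs_of_nonneg hA0]
      exact mul_le_of_le_one_right (abs_nonneg _) hA1
    · rw [abs_mul, abs_of_nonneg h0.1]
      exact (mul_le_of_le_one_left (abs_nonneg _) h0.2).trans ih'

/-- ratio of falling factorials -/
noncomputable def qr (m a k : ℕ) : ℝ := (k.descFactorial a : ℝ) / (m.descFactorial a : ℝ)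

lemma qr_eq (m a k : ℕ) : qr m a k = ∏ j ∈ Finset.range a, (((k - j : ℕ) : ℝ) / ((m - j : ℕ) : ℝ)) := by
  unfold qr
  rw [Nat.descFactorial_eq_prod_range, Nat.descFactorial_eq_prod_range, Nat.cast_prod, Nat.cast_prod,
    Finset.prod_div_distrib]

lemma fac_mem {m k j : ℕ} (hk : k ≤ m) :
    0 ≤ ((k - j : ℕ) : ℝ) / ((m - j : ℕ) : ℝ) ∧ ((k - j : ℕ) : ℝ) / ((m - j : ℕ) : ℝ) ≤ 1 := by
  refine ⟨by positivity, div_le_one_of_le₀ ?_ (by positivity)⟩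
  exact_mod_cast Nat.sub_le_sub_right hk j

lemma qr_mem {m a k : ℕ} (hk : k ≤ m) : 0 ≤ qr m a k ∧ qr m a k ≤ 1 := by
  rw [qr_eq]
  exact ⟨Finset.prod_nonneg fun j _ => (fac_mem hk).1,
    Finset.prod_le_one (fun j _ => (fac_mem hk).1) fun j _ => (fac_mem hk).2⟩

lemma qr_close {m a k : ℕ} (hk : k ≤ m) (ha : a < m) :
    |qr m a k - ((k : ℝ) / m) ^ a| ≤ a * (a / ((m : ℝ) - a)) := by
  have hm : (0 : ℝ) < m := by exact_mod_cast (Nat.zero_le a).trans_lt ha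
  have ham : (a : ℝ) < m := by exact_mod_cast ha
  have hkm : (k : ℝ) ≤ m := by exact_mod_cast hk
  have hx : 0 ≤ (k : ℝ) / m ∧ (k : ℝ) / m ≤ 1 := ⟨by positivity, div_le_one_of_le₀ hkm hm.le⟩
  have hpow : ((k : ℝ) / m) ^ a = ∏ _j ∈ Finset.range a, (k : ℝ) / m := by
    rw [Finset.prod_const, Finset.card_range]
  rw [qr_eq, hpow]
  refine (abs_prod_sub_prod_le_aux _ _ _ (fun j _ => fac_mem hk) (fun j _ => hx)).trans ?_
  refine (Finset.sum_le_card_nsmul _ _ (a / ((m : ℝ) - a)) fun j hj => ?_).trans (le_of_eq (by simp))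
  have hja : j < a := Finset.mem_range.1 hj
  have hja' : (j : ℝ) ≤ a := by exact_mod_cast hja.le
  have hmj : (0 : ℝ) < m - j := by linarith
  have hmain : |((k - j : ℕ) : ℝ) / ((m - j : ℕ) : ℝ) - (k : ℝ) / m| ≤ j / ((m : ℝ) - j) := by
    rw [Nat.cast_sub (hja.trans ha).le]
    rcases le_total j k with h | h
    · rw [Nat.cast_sub h]
      have e : ((k : ℝ) - j) / (m - j) - k / m = -((j / (m - j)) * (1 - k / m)) := by
        field_simp
        ring
      rw [e, abs_neg, abs_of_nonneg (mul_nonneg (by positivity) (by linarith [hx.2]))]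
      exact mul_le_of_le_one_right (by positivity) (by linarith [hx.1])
    · rw [Nat.sub_eq_zero_of_le h, Nat.cast_zero, zero_div, zero_sub, abs_neg, abs_of_nonneg hx.1]
      have hkj : (k : ℝ) ≤ j := by exact_mod_cast h
      gcongr
      linarith [(Nat.cast_nonneg j : (0 : ℝ) ≤ j)]
  refine hmain.trans ?_
  have : (0 : ℝ) < m - a := by linarith
  gcongr

lemma bern_sum {A : Type*} [CommRing A] [Algebra ℝ A] (y : A) {a m : ℕ} (ha : a ≤ m) :
    y ^ a = ∑ k ∈ Finset.range (m + 1),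
      qr m a k • ((m.choose k : ℝ) • (y ^ k * (1 - y) ^ (m - k))) := by
  have h1 : y ^ a = y ^ a * (y + (1 - y)) ^ (m - a) := by simp
  rw [h1, add_pow, Finset.mul_sum]
  have hsplit : m + 1 = a + (m - a + 1) := by omega
  conv_rhs => rw [hsplit, Finset.sum_range_add]
  rw [Finset.sum_eq_zero (s := Finset.range a), zero_add]
  · refine Finset.sum_congr rfl fun j hj => ?_
    have hj' : j ≤ m - a := by simpa [Nat.lt_succ_iff] using hj
    have hc : qr m a (a + j) * (m.choose (a + j) : ℝ) = ((m - a).choose j : ℝ) := by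
      unfold qr
      have hne : (m.descFactorial a : ℝ) ≠ 0 := by
        have := Nat.descFactorial_pos.2 ha
        positivity
      rw [div_mul_eq_mul_div, div_eq_iff hne]
      have := Nat.choose_mul (n := m) (k := a + j) (s := a) (Nat.le_add_right a j)
      rw [Nat.add_sub_cancel_left] at this
      rw [Nat.descFactorial_eq_factorial_mul_choose, Nat.descFactorial_eq_factorial_mul_choose]
      have h' : (m.choose (a + j) : ℝ) * ((a + j).choose a : ℝ) = m.choose a * (m - a).choose j := by
        exact_mod_cast this
      push_cast
      linear_combination (a.factorial : ℝ) * h'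
    rw [← mul_smul, hc, Nat.sub_add_eq, pow_add, Algebra.smul_def, map_natCast]
    ring
  · intro k hk
    have : qr m a k = 0 := by
      unfold qr
      rw [Nat.descFactorial_eq_zero_iff_lt.2 (Finset.mem_range.1 hk)]
      simp
    rw [this, zero_smul]

lemma hausdorff {n : ℕ} {A : Type*} [CommRing A] [Algebra ℝ A] (Λ : A →ₗ[ℝ] ℝ) (y : Fin n → A)
    (hpos : ∀ k l : Fin n → ℕ, 0 ≤ Λ (∏ i, (y i ^ k i * (1 - y i) ^ l i)))
    (P : MvPolynomial (Fin n) ℝ)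
    (hP : ∀ x : Fin n → ℝ, (∀ i, 0 ≤ x i ∧ x i ≤ 1) → 0 ≤ eval x P) : 0 ≤ Λ (aeval y P) := by
  classical
  let w : ℕ → (Fin n → ℕ) → ℝ := fun m k =>
    Λ (∏ i, ((m.choose (k i) : ℝ) • (y i ^ k i * (1 - y i) ^ (m - k i))))
  have hw : ∀ m k, 0 ≤ w m k := fun m k => by
    change 0 ≤ Λ (∏ i, ((m.choose (k i) : ℝ) • (y i ^ k i * (1 - y i) ^ (m - k i))))
    rw [Finset.prod_smul, map_smul, smul_eq_mul]
    exact mul_nonneg (by positivity) (hpos k fun i => m - k i)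
  let B : ℕ → Finset (Fin n → ℕ) := fun m => Fintype.piFinset fun _ => Finset.range (m + 1)
  have hmon : ∀ (m : ℕ) (α : Fin n →₀ ℕ), (∀ i, α i ≤ m) →
      Λ (∏ i, y i ^ α i) = ∑ k ∈ B m, (∏ i, qr m (α i) (k i)) * w m k := by
    intro m α hα
    have : ∏ i, y i ^ α i = ∑ k ∈ B m, (∏ i, qr m (α i) (k i)) •
        ∏ i, ((m.choose (k i) : ℝ) • (y i ^ k i * (1 - y i) ^ (m - k i))) := by
      rw [Finset.prod_congr rfl fun i _ => bern_sum (y i) (hα i), Finset.prod_univ_sum]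
      refine Finset.sum_congr rfl fun k _ => ?_
      rw [← Finset.prod_smul]
    rw [this, map_sum]
    simp only [map_smul, smul_eq_mul]
    rfl
  have hone : ∀ m, ∑ k ∈ B m, w m k = Λ 1 := fun m => by
    have := hmon m 0 (by simp)
    simpa [qr] using this.symm
  let M : ℕ := ∑ α ∈ P.support, ∑ i, α i
  have hM : ∀ α ∈ P.support, ∀ i, α i ≤ M := fun α hα i =>
    (Finset.single_le_sum (f := fun i => α i) (fun _ _ => Nat.zero_le _) (Finset.mem_univ i)).trans
      (Finset.single_le_sum (f := fun α : Fin n →₀ ℕ => ∑ i, α i) (fun _ _ => Nat.zero_le _) hα)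
  let η : ℕ → ℝ := fun m => ∑ α ∈ P.support, |coeff α P| * ∑ i : Fin n, ((α i : ℝ) * (α i / ((m : ℝ) - α i)))
  have hη : Tendsto η atTop (𝓝 0) := by
    have : (0 : ℝ) = ∑ α ∈ P.support, |coeff α P| * ∑ i : Fin n, ((α i : ℝ) * 0) := by simp
    rw [this]
    refine tendsto_finsetSum _ fun α _ => Tendsto.const_mul _ (tendsto_finsetSum _ fun i _ =>
      Tendsto.const_mul _ ?_)
    refine Tendsto.const_div_atTop ?_ _
    exact tendsto_atTop_add_const_right _ _ tendsto_natCast_atTop_atTop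
  have key : ∀ m, M < m → -(η m) * Λ 1 ≤ Λ (aeval y P) := by
    intro m hm
    have hexp : Λ (aeval y P) = ∑ k ∈ B m, (∑ α ∈ P.support, coeff α P * ∏ i, qr m (α i) (k i)) * w m k := by
      rw [MvPolynomial.aeval_def, MvPolynomial.eval₂_eq', map_sum]
      simp_rw [← Algebra.smul_def, map_smul, smul_eq_mul, Finset.sum_mul]
      rw [Finset.sum_comm]
      refine Finset.sum_congr rfl fun α hα => ?_
      rw [hmon m α fun i => (hM α hα i).trans hm.le, Finset.mul_sum]
      exact Finset.sum_congr rfl fun k _ => (mul_assoc _ _ _).symm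
    rw [hexp, ← hone m, Finset.mul_sum]
    refine Finset.sum_le_sum fun k hk => mul_le_mul_of_nonneg_right ?_ (hw m k)
    have hk' : ∀ i, k i ≤ m := fun i => Nat.lt_succ_iff.1 (Finset.mem_range.1 (Fintype.mem_piFinset.1 hk i))
    have hx : ∀ i, 0 ≤ (k i : ℝ) / m ∧ (k i : ℝ) / m ≤ 1 := fun i =>
      ⟨by positivity, div_le_one_of_le₀ (by exact_mod_cast hk' i) (by positivity)⟩
    have h0 := hP (fun i => (k i : ℝ) / m) hx
    rw [MvPolynomial.eval_eq'] at h0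
    have hdiff : |∑ α ∈ P.support, coeff α P * ∏ i, qr m (α i) (k i) -
        ∑ α ∈ P.support, coeff α P * ∏ i, ((k i : ℝ) / m) ^ α i| ≤ η m := by
      rw [← Finset.sum_sub_distrib]
      refine (Finset.abs_sum_le_sum_abs _ _).trans (Finset.sum_le_sum fun α hα => ?_)
      rw [← mul_sub, abs_mul]
      refine mul_le_mul_of_nonneg_left ?_ (abs_nonneg _)
      refine (abs_prod_sub_prod_le_aux _ _ _ (fun i _ => qr_mem (hk' i))
        (fun i _ => ⟨pow_nonneg (hx i).1 _, pow_le_one₀ (hx i).1 (hx i).2⟩)).trans ?_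
      exact Finset.sum_le_sum fun i _ => qr_close (hk' i) ((hM α hα i).trans_lt hm)
    have := (abs_le.1 hdiff).1
    linarith
  have hlim : Tendsto (fun m => -(η m) * Λ 1) atTop (𝓝 (-0 * Λ 1)) := hη.neg.mul_const _
  rw [neg_zero, zero_mul] at hlim
  exact le_of_tendsto hlim ((eventually_gt_atTop M).mono key)

/-- the series `cos (g X)` -/
noncomputable def psC (g : ℝ) : PowerSeries ℝ :=
  PowerSeries.mk fun k => if Even k then g ^ k * ((-1) ^ (k / 2) / (k.factorial : ℝ)) else 0

/-- the series `sin (g X) / g` -/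
noncomputable def psT (g : ℝ) : PowerSeries ℝ :=
  PowerSeries.mk fun k => if Even k then 0 else g ^ (k - 1) * ((-1) ^ (k / 2) / (k.factorial : ℝ))

lemma d_psC (g : ℝ) : PowerSeries.derivative ℝ (psC g) = PowerSeries.C (-g ^ 2) * psT g := by
  ext k
  rw [PowerSeries.coeff_derivative, PowerSeries.coeff_C_mul, psC, psT, PowerSeries.coeff_mk,
    PowerSeries.coeff_mk]
  have hk : ((k.factorial : ℝ)) ≠ 0 := by positivity
  have hk1 : ((k : ℝ) + 1) ≠ 0 := by positivity
  rcases Nat.even_or_odd k with h | h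
  · rw [if_neg (by simpa [Nat.even_add_one] using h), if_pos h]; simp
  · rw [if_pos h.add_one, if_neg (by simpa using h)]
    obtain ⟨m, rfl⟩ := h
    have e1 : (2 * m + 1 + 1) / 2 = m + 1 := by omega
    have e2 : (2 * m + 1) / 2 = m := by omega
    rw [e1, e2, Nat.factorial_succ (2 * m + 1), Nat.add_sub_cancel]
    push_cast at hk1 ⊢
    field_simp
    ring

lemma d_psT (g : ℝ) : PowerSeries.derivative ℝ (psT g) = psC g := by
  ext k
  rw [PowerSeries.coeff_derivative, psC, psT, PowerSeries.coeff_mk, PowerSeries.coeff_mk]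
  have hk : ((k.factorial : ℝ)) ≠ 0 := by positivity
  have hk1 : ((k : ℝ) + 1) ≠ 0 := by positivity
  rcases Nat.even_or_odd k with h | h
  · rw [if_neg (by simpa [Nat.even_add_one] using h), if_pos h]
    obtain ⟨m, rfl⟩ := h
    have e1 : (m + m + 1) / 2 = m := by omega
    have e2 : (m + m) / 2 = m := by omega
    rw [e1, e2, Nat.factorial_succ (m + m), Nat.add_sub_cancel]
    push_cast at hk1 ⊢
    field_simp
  · rw [if_pos h.add_one, if_neg (by simpa using h)]; simp

lemma ps_pyth (g : ℝ) : psC g * psC g + PowerSeries.C (g ^ 2) * (psT g * psT g) = 1 := by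
  apply PowerSeries.derivative.ext
  · have h0 : PowerSeries.derivative ℝ (PowerSeries.C (g ^ 2)) = 0 := by
      simp
    rw [map_add, Derivation.leibniz, Derivation.leibniz, Derivation.leibniz, d_psC, d_psT, h0,
      Derivation.map_one_eq_zero]
    simp only [smul_eq_mul, map_neg]
    ring
  · simp [psC, psT]

/-- substitute the `i`-th variable -/
noncomputable def sub1 {n : ℕ} (i : Fin n) : PowerSeries ℝ →ₐ[ℝ] MvPowerSeries (Fin n) ℝ :=
  PowerSeries.substAlgHom (PowerSeries.HasSubst.X i)

lemma coeff_sub1 {n : ℕ} (i : Fin n) (p : PowerSeries ℝ) (α : Fin n →₀ ℕ) :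
    MvPowerSeries.coeff α (sub1 i p) =
      if α = Finsupp.single i (α i) then PowerSeries.coeff (α i) p else 0 := by
  classical
  rw [sub1, PowerSeries.coe_substAlgHom, PowerSeries.coeff_subst_single]

lemma bd_sub1 {n : ℕ} (i : Fin n) (p : PowerSeries ℝ)
    (hp : ∀ k, |PowerSeries.coeff k p| ≤ 1 / (k.factorial : ℝ)) : Bd 1 1 (sub1 i p) := by
  intro α
  rw [coeff_sub1, one_mul]
  split_ifs with h
  · refine (hp _).trans (le_of_eq ?_)
    unfold wt
    rw [Finset.prod_eq_single i]
    · simp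
    · intro j _ hj
      rw [h]; simp [Finsupp.single_eq_of_ne hj]
    · simp
  · simpa using wt_nonneg zero_le_one α

lemma abs_coeff_psC {g : ℝ} (h0 : 0 ≤ g) (h1 : g ≤ 1) (k : ℕ) :
    |PowerSeries.coeff k (psC g)| ≤ 1 / (k.factorial : ℝ) := by
  rw [psC, PowerSeries.coeff_mk]
  split_ifs
  · rw [abs_mul, abs_div, abs_pow, abs_pow, abs_neg, abs_one, one_pow, abs_of_nonneg h0, Nat.abs_cast]
    exact mul_le_of_le_one_left (by positivity) (pow_le_one₀ h0 h1)
  · rw [abs_zero]; positivity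

lemma abs_coeff_psT {g : ℝ} (h0 : 0 ≤ g) (h1 : g ≤ 1) (k : ℕ) :
    |PowerSeries.coeff k (psT g)| ≤ 1 / (k.factorial : ℝ) := by
  rw [psT, PowerSeries.coeff_mk]
  split_ifs
  · rw [abs_zero]; positivity
  · rw [abs_mul, abs_div, abs_pow, abs_pow, abs_neg, abs_one, one_pow, abs_of_nonneg h0, Nat.abs_cast]
    exact mul_le_of_le_one_left (by positivity) (pow_le_one₀ h0 h1)

/-- the scale -/
noncomputable def gs (j : ℕ) : ℝ := 1 / ((j : ℝ) + 1)

lemma gs_pos (j : ℕ) : 0 < gs j := by unfold gs; positivity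

lemma gs_le (j : ℕ) : gs j ≤ 1 := by
  unfold gs
  rw [div_le_one (by positivity)]
  linarith [(Nat.cast_nonneg j : (0 : ℝ) ≤ j)]

lemma gs_tendsto : Tendsto gs atTop (𝓝 0) := tendsto_one_div_add_atTop_nhds_zero_nat

lemma coeff_psC_tendsto (k : ℕ) : Tendsto (fun j => PowerSeries.coeff k (psC (gs j))) atTop
    (𝓝 (PowerSeries.coeff k (1 : PowerSeries ℝ))) := by
  have hcont : Continuous (fun g : ℝ => PowerSeries.coeff k (psC g)) := by
    simp only [psC, PowerSeries.coeff_mk]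
    split_ifs <;> fun_prop
  have := (hcont.tendsto 0).comp gs_tendsto
  suffices e : PowerSeries.coeff k (1 : PowerSeries ℝ) = PowerSeries.coeff k (psC 0) by
    rw [e]; exact this
  rw [PowerSeries.coeff_one, psC, PowerSeries.coeff_mk]
  by_cases hk : k = 0
  · subst hk; simp
  · simp [hk]

lemma coeff_psT_tendsto (k : ℕ) : Tendsto (fun j => PowerSeries.coeff k (psT (gs j))) atTop
    (𝓝 (PowerSeries.coeff k (PowerSeries.X : PowerSeries ℝ))) := by
  have hcont : Continuous (fun g : ℝ => PowerSeries.coeff k (psT g)) := by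
    simp only [psT, PowerSeries.coeff_mk]
    split_ifs <;> fun_prop
  have := (hcont.tendsto 0).comp gs_tendsto
  suffices e : PowerSeries.coeff k (PowerSeries.X : PowerSeries ℝ) = PowerSeries.coeff k (psT 0) by
    rw [e]; exact this
  rw [PowerSeries.coeff_X, psT, PowerSeries.coeff_mk]
  by_cases hk : k = 1
  · subst hk; simp
  · rw [if_neg hk]
    split_ifs with he
    · rfl
    · have : k - 1 ≠ 0 := by
        intro h
        have : k = 0 := by omega
        subst this; simp at he
      simp [this]

lemma good_sub1 {n : ℕ} (i : Fin n) (p : ℕ → PowerSeries ℝ) (p₀ : PowerSeries ℝ)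
    (hp : ∀ j k, |PowerSeries.coeff k (p j)| ≤ 1 / (k.factorial : ℝ))
    (ht : ∀ k, Tendsto (fun j => PowerSeries.coeff k (p j)) atTop (𝓝 (PowerSeries.coeff k p₀))) :
    GoodSeq (fun j => sub1 i (p j)) (sub1 i p₀) := by
  refine ⟨⟨1, 1, zero_le_one, zero_le_one, fun j => bd_sub1 i _ (hp j)⟩, fun α => ?_⟩
  simp only [coeff_sub1]
  split_ifs
  · exact ht _
  · exact tendsto_const_nhds

/-- approximations of the coordinates -/
noncomputable def tj {n : ℕ} (j : ℕ) (i : Fin n) : MvPowerSeries (Fin n) ℝ :=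
  sub1 i (psC (gs j)) * sub1 i (psT (gs j))

lemma good_tj {n : ℕ} (i : Fin n) : GoodSeq (fun j => tj j i) (MvPowerSeries.X i) := by
  have h1 := good_sub1 i (fun j => psC (gs j)) 1
    (fun j => abs_coeff_psC (gs_pos j).le (gs_le j)) coeff_psC_tendsto
  have h2 := good_sub1 i (fun j => psT (gs j)) PowerSeries.X
    (fun j => abs_coeff_psT (gs_pos j).le (gs_le j)) coeff_psT_tendsto
  have h := h1.mul h2
  have hX : sub1 i (PowerSeries.X : PowerSeries ℝ) = MvPowerSeries.X i := by
    rw [sub1, PowerSeries.coe_substAlgHom, PowerSeries.subst_X (PowerSeries.HasSubst.X i)]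
  rwa [map_one, one_mul, hX] at h

lemma good_aeval {n : ℕ} (f : MvPolynomial (Fin n) ℝ) :
    GoodSeq (fun j => aeval (tj j) f) (f : MvPowerSeries (Fin n) ℝ) := by
  induction f using MvPolynomial.induction_on with
  | C a =>
    simp only [MvPolynomial.aeval_C, MvPolynomial.coe_C]
    exact GoodSeq.const ⟨|a|, 0, abs_nonneg _, le_rfl, bd_C a⟩
  | add p q hp hq =>
    simpa only [map_add, MvPolynomial.coe_add] using hp.add hq
  | mul_X p i hp =>
    simpa only [map_mul, MvPolynomial.coe_mul, MvPolynomial.aeval_X, MvPolynomial.coe_X]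
      using hp.mul (good_tj i)

lemma ext_aeval_nonneg {n : ℕ} {L : MvPolynomial (Fin n) ℝ →ₗ[ℝ] ℝ} (hL : MomSum L)
    (hpos : ∀ p, 0 ≤ L (p * p)) (f : MvPolynomial (Fin n) ℝ)
    (hf : ∀ x : Fin n → ℝ, 0 ≤ eval x f) (j : ℕ) : 0 ≤ extS L (aeval (tj j) f) := by
  set g := gs j with hg
  have hg0 : 0 < g := gs_pos j
  let c : Fin n → goodAlg n := fun i => ⟨sub1 i (psC g), 1, 1, zero_le_one, zero_le_one,
    bd_sub1 i _ (abs_coeff_psC (gs_pos j).le (gs_le j))⟩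
  let t : Fin n → goodAlg n := fun i => ⟨sub1 i (psT g), 1, 1, zero_le_one, zero_le_one,
    bd_sub1 i _ (abs_coeff_psT (gs_pos j).le (gs_le j))⟩
  let w : ℝ := 1 / Real.sqrt 2
  have hw : w * w = 1 / 2 := by
    simp only [w]
    rw [div_mul_div_comm, Real.mul_self_sqrt (by norm_num)]; norm_num
  have hpy : ∀ i, c i * c i + algebraMap ℝ _ (g ^ 2) * (t i * t i) = 1 := by
    intro i
    apply Subtype.ext
    have := congrArg (sub1 i) (ps_pyth g)
    rw [map_add, map_mul, map_mul, map_mul, map_one] at this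
    have hC : sub1 i (PowerSeries.C (g ^ 2)) = algebraMap ℝ _ (g ^ 2) := (sub1 i).commutes _
    rw [hC] at this
    exact this
  let a : ℝ → goodAlg n := algebraMap ℝ (goodAlg n)
  let u : Fin n → goodAlg n := fun i => a w * (c i + a g * t i)
  let v : Fin n → goodAlg n := fun i => a w * (c i - a g * t i)
  have haw : a w * a w = a (1 / 2) := by simp only [a]; rw [← map_mul, hw]
  have hag : a (g ^ 2) = a g * a g := by simp only [a]; rw [← map_mul, sq]
  have ha2 : a (1 / 2) * 2 = 1 := by
    have : (2 : goodAlg n) = a 2 := (map_ofNat (algebraMap ℝ (goodAlg n)) 2).symm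
    rw [this]; simp only [a]; rw [← map_mul]; norm_num
  have hy : ∀ i, 1 - u i * u i = v i * v i := by
    intro i
    have h1 : c i * c i + a (g ^ 2) * (t i * t i) = 1 := hpy i
    rw [hag] at h1
    simp only [u, v]
    linear_combination (-2 * (c i * c i + a g * a g * (t i * t i))) * haw
      - (c i * c i + a g * a g * (t i * t i)) * ha2 - h1
  let P : MvPolynomial (Fin n) ℝ := bind₁ (fun i => C (1 / (2 * g)) * (2 * X i - 1)) f
  have key := hausdorff (extLin hL) (fun i => u i * u i) (fun k l => by
    have hsq : ∏ i, ((u i * u i) ^ k i * (1 - u i * u i) ^ l i) =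
        (∏ i, (u i ^ k i * v i ^ l i)) * ∏ i, (u i ^ k i * v i ^ l i) := by
      rw [← Finset.prod_mul_distrib]
      refine Finset.prod_congr rfl fun i _ => ?_
      rw [hy i]; ring
    rw [hsq]
    exact ext_sq_nonneg hL hpos (Subtype.property _)) P (fun x _ => by
      have : eval x P = eval (fun i => 1 / (2 * g) * (2 * x i - 1)) f := by
        simp only [P]
        rw [← MvPolynomial.coe_aeval_eq_eval, ← MvPolynomial.coe_aeval_eq_eval]
        simp only [RingHom.coe_coe]
        rw [MvPolynomial.aeval_bind₁]
        congr 2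
        ext i
        simp
      rw [this]; exact hf _)
  have hval : ((aeval (fun i => u i * u i) P : goodAlg n) : MvPowerSeries (Fin n) ℝ)
      = aeval (tj j) f := by
    simp only [P]
    rw [MvPolynomial.aeval_bind₁]
    rw [← Subalgebra.coe_val]
    have hi : ∀ i, aeval (fun i => u i * u i) (C (1 / (2 * g)) * (2 * X i - 1) : MvPolynomial (Fin n) ℝ)
        = c i * t i := by
      intro i
      rw [map_mul, map_sub, map_mul, map_one, MvPolynomial.aeval_C, MvPolynomial.aeval_X, map_ofNat]
      have hgg : a (1 / (2 * g)) * (2 * a g) = 1 := by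
        have : (2 : goodAlg n) = a 2 := (map_ofNat (algebraMap ℝ (goodAlg n)) 2).symm
        rw [this]; simp only [a]; rw [← map_mul, ← map_mul, one_div_mul_cancel (by positivity), map_one]
      have h1 : c i * c i + a (g ^ 2) * (t i * t i) = 1 := hpy i
      rw [hag] at h1
      have h2 : 2 * (u i * u i) - 1 = 2 * a g * (c i * t i) := by
        simp only [u]
        linear_combination (2 * (c i + a g * t i) ^ 2) * haw + ((c i + a g * t i) ^ 2) * ha2 + h1
      rw [h2]
      change a (1 / (2 * g)) * _ = _
      linear_combination (c i * t i) * hgg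
    simp only [hi]
    rw [MvPolynomial.comp_aeval_apply]
    rfl
  have : extLin hL (aeval (fun i => u i * u i) P) = extS L (aeval (tj j) f) := by
    rw [← hval]; rfl
  rwa [this] at key

lemma functional_nonneg {n : ℕ} {L : MvPolynomial (Fin n) ℝ →ₗ[ℝ] ℝ} (hL : MomSum L)
    (hpos : ∀ p, 0 ≤ L (p * p)) (f : MvPolynomial (Fin n) ℝ)
    (hf : ∀ x : Fin n → ℝ, 0 ≤ eval x f) : 0 ≤ L f := by
  rw [← ext_coe]
  exact ge_of_tendsto' (ext_tendsto hL (good_aeval f)) fun j => ext_aeval_nonneg hL hpos f hf j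

theorem sos_approx_of_nonneg (n : ℕ) (f : MvPolynomial (Fin n) ℝ)
    (hf : ∀ x : Fin n → ℝ, 0 ≤ eval x f) :
    ∀ ε : ℝ, 0 < ε → ∃ r₀ : ℕ, ∀ r : ℕ, r₀ ≤ r →
      IsSOS (f + C ε * theta n r) := by
  intro ε hε
  simp only [isSOS_iff]
  suffices h : ∃ r₀, IsSumSq (f + C ε * theta n r₀) by
    obtain ⟨r₀, h⟩ := h
    exact ⟨r₀, fun r hr => theta_mono_s11 hr hε.le le_rfl h⟩
  rcases Nat.eq_zero_or_pos n with rfl | hn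
  · refine ⟨0, ?_⟩
    have hc := MvPolynomial.eq_C_of_isEmpty f
    have h0 := hf 0
    rw [hc, eval_C] at h0
    have hz : theta 0 0 = 0 := by simp [theta]
    rw [hz, mul_zero, add_zero, hc, ← Real.mul_self_sqrt h0, C_mul]
    exact IsSumSq.mul_self _
  · have : NeZero n := ⟨hn.ne'⟩
    by_contra! hcon
    obtain ⟨L, hL, hθ, hneg⟩ := exists_functional f hε hcon
    exact absurd (functional_nonneg (momSum L hL hθ) hL f hf) (not_le.2 hneg)
end
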